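/- arXiv:2409.03335 — 3 statements merged into one kernel-verified Lean document; each statement's English description precedes it below -/
import Mathlib

section
/- Fix δ ∈ (0,1). Suppose the number of labeled samples satisfies L < 2(1−δ)·k·log(p−k+1)/λ. Then for any estimator Ŝ of the support, based on the L labeled samples D_L, the worst-case error probability satisfies max over k-element supports S of P(Ŝ ≠ S) > δ − log 2 / log(p−k+1). -/
open MeasureTheory ProbabilityTheory Filter
open scoped ENNReal NNReal

noncomputable section

/-- Product of independent one-dimensional Gaussians `N(m j, 1)`: the law of `N(m, I_p)`. -/
def gaussPi {p : ℕ} (m : Fin p → ℝ) : Measure (Fin p → ℝ) :=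
  Measure.pi fun j => gaussianReal (m j) 1

/-- The law of a labeled sample `(x, y)` from the symmetric sparse Gaussian mixture model:
`y` uniform on `{-1, 1}` and `x | y ~ N(y μ, I_p)`. -/
def labeledLaw {p : ℕ} (m : Fin p → ℝ) : Measure ((Fin p → ℝ) × ℝ) :=
  (2 : ℝ≥0∞)⁻¹ • (gaussPi m).map (fun x => (x, (1 : ℝ)))
    + (2 : ℝ≥0∞)⁻¹ • (gaussPi (fun j => -m j)).map (fun x => (x, (-1 : ℝ)))

/-- The `k`-sparse mean vector with support `S` and nonzero entries `√(λ/k)`. -/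
def muVec (p k : ℕ) (lam : ℝ) (S : Finset (Fin p)) : Fin p → ℝ :=
  fun j => if j ∈ S then Real.sqrt (lam / k) else 0

/-!
Fix `T` with `k - 1` elements. The `p - k + 1` supports `T ∪ {j}`, `j ∉ T`, are hard to tell apart:
the data law under each of them lies within Kullback–Leibler divergence `L λ / (2k)` of one
reference law, that of the mean vector supported on `T`. Indeed a labeled sample is `(y z, y)` with
`z ~ N(μ, I)` independent of the sign `y`, so by data processing it separates two means no better
than `z` does. The `M` decision regions of an estimator are disjoint, so one of them, `B`, has
reference probability at most `1 / M`, and the Donsker–Varadhan inequality for the function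
`log M · 1_B` bounds the probability of `B` under its own hypothesis by `(KL + log 2) / log M`.
Since the estimator need not be measurable, each region is first shrunk to the complement of a
measurable hull of its error event, which leaves the (outer) error probability unchanged.
-/

open InformationTheory

section KullbackLeibler

variable {α β : Type*} [MeasurableSpace α] [MeasurableSpace β]

lemma klDiv_map_measurableEquiv (e : α ≃ᵐ β) (μ ν : Measure α) [IsFiniteMeasure μ]
    [IsFiniteMeasure ν] : klDiv (μ.map e) (ν.map e) = klDiv μ ν := by
  refine le_antisymm (klDiv_map_le μ ν e.measurable) ?_
  simpa [Measure.map_map e.symm.measurable e.measurable] using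
    klDiv_map_le (μ.map e) (ν.map e) e.symm.measurable

lemma klDiv_prod_right (μ ν : Measure α) [IsFiniteMeasure μ] [IsFiniteMeasure ν]
    (ρ : Measure β) [IsProbabilityMeasure ρ] : klDiv (μ.prod ρ) (ν.prod ρ) = klDiv μ ν := by
  simpa only [Measure.compProd_const] using klDiv_compProd_left μ ν (Kernel.const α ρ)

lemma klDiv_prod_left (ρ : Measure α) [IsProbabilityMeasure ρ] (μ ν : Measure β)
    [IsFiniteMeasure μ] [IsFiniteMeasure ν] : klDiv (ρ.prod μ) (ρ.prod ν) = klDiv μ ν := by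
  rw [← klDiv_prod_right μ ν ρ, ← Measure.prod_swap, ← Measure.prod_swap (μ := ν)]
  exact klDiv_map_measurableEquiv MeasurableEquiv.prodComm _ _

lemma klDiv_prod (μ μ' : Measure α) (ν ν' : Measure β) [IsProbabilityMeasure μ]
    [IsFiniteMeasure μ'] [IsProbabilityMeasure ν] [IsProbabilityMeasure ν'] :
    klDiv (μ.prod ν) (μ'.prod ν') = klDiv μ μ' + klDiv ν ν' := by
  rw [← klDiv_prod_left μ ν ν']
  simpa only [Measure.compProd_const] using
    klDiv_compProd_eq_add μ μ' (Kernel.const α ν) (Kernel.const α ν')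

theorem klDiv_pi {ι : Type*} [Fintype ι] {X : ι → Type*} [∀ i, MeasurableSpace (X i)]
    (μ ν : ∀ i, Measure (X i)) [∀ i, IsProbabilityMeasure (μ i)]
    [∀ i, IsProbabilityMeasure (ν i)] :
    klDiv (Measure.pi μ) (Measure.pi ν) = ∑ i, klDiv (μ i) (ν i) := by
  revert X
  refine Fintype.induction_empty_option (P := fun ι _ => ∀ {X : ι → Type _}
    [∀ i, MeasurableSpace (X i)] (μ ν : ∀ i, Measure (X i)) [∀ i, IsProbabilityMeasure (μ i)]
    [∀ i, IsProbabilityMeasure (ν i)],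
    klDiv (Measure.pi μ) (Measure.pi ν) = ∑ i, klDiv (μ i) (ν i)) ?_ ?_ ?_ ι
  · intro ι κ _ e ih X _ μ ν _ _
    let := Fintype.ofEquiv κ e.symm
    rw [← Measure.pi_map_piCongrLeft e μ, ← Measure.pi_map_piCongrLeft e ν,
      klDiv_map_measurableEquiv, ih, e.sum_comp fun i => klDiv (μ i) (ν i)]
  · intro X _ μ ν _ _
    rw [Measure.pi_of_empty μ isEmptyElim, Measure.pi_of_empty ν isEmptyElim, klDiv_self,
      Fintype.sum_empty]
  · intro ι _ ih X _ μ ν _ _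
    rw [← Measure.pi_map_piOptionEquivProd μ, ← Measure.pi_map_piOptionEquivProd ν,
      klDiv_map_measurableEquiv, klDiv_prod, ih, Fintype.sum_option, add_comm]

lemma klDiv_tilted_right_self (μ : Measure α) [IsProbabilityMeasure μ] {f : α → ℝ}
    (hf : Integrable f μ) (hexp : Integrable (fun x => Real.exp (f x)) μ) :
    klDiv μ (μ.tilted f) = ENNReal.ofReal (Real.log (∫ x, Real.exp (f x) ∂μ) - ∫ x, f x ∂μ) := by
  have : IsProbabilityMeasure (μ.tilted f) := isProbabilityMeasure_tilted hexp
  have hllr : Integrable (llr μ μ) μ := (integrable_zero α ℝ μ).congr (llr_self μ).symm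
  rw [klDiv_of_ac_of_integrable (absolutelyContinuous_tilted hexp)
      (integrable_llr_tilted_right .rfl hf hllr hexp),
    integral_llr_tilted_right .rfl hf hexp hllr, integral_congr_ae (llr_self μ)]
  simp only [Pi.zero_apply, integral_zero, probReal_univ]
  ring_nf

/-- The Donsker–Varadhan inequality: Gibbs' inequality for `μ` against `ν` tilted by `f`. -/
theorem integral_le_toReal_klDiv_add_log_integral_exp {μ ν : Measure α} [IsProbabilityMeasure μ]
    [IsProbabilityMeasure ν] (hμν : klDiv μ ν ≠ ∞) {f : α → ℝ} (hf : Integrable f μ)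
    (hexp : Integrable (fun x => Real.exp (f x)) ν) :
    ∫ x, f x ∂μ ≤ (klDiv μ ν).toReal + Real.log (∫ x, Real.exp (f x) ∂ν) := by
  obtain ⟨hac, hllr⟩ := klDiv_ne_top_iff.1 hμν
  have : IsProbabilityMeasure (ν.tilted f) := isProbabilityMeasure_tilted hexp
  have hgibbs : 0 ≤ ∫ x, llr μ (ν.tilted f) x ∂μ := by
    rw [← toReal_klDiv_of_measure_eq (hac.trans (absolutelyContinuous_tilted hexp)) (by simp)]
    exact ENNReal.toReal_nonneg
  rw [integral_llr_tilted_right hac hf hexp hllr,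
    ← toReal_klDiv_of_measure_eq hac (by simp)] at hgibbs
  linarith

end KullbackLeibler

section Fano

variable {Ω ι : Type*} [MeasurableSpace Ω]

lemma measureReal_mul_log_le_toReal_klDiv_add_log_two {μ ν : Measure Ω} [IsProbabilityMeasure μ]
    [IsProbabilityMeasure ν] (hμν : klDiv μ ν ≠ ∞) {B : Set Ω} (hB : MeasurableSet B) {M : ℝ}
    (hM : 1 ≤ M) (hνB : ν.real B ≤ M⁻¹) :
    μ.real B * Real.log M ≤ (klDiv μ ν).toReal + Real.log 2 := by
  have hM0 : 0 < M := by linarith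
  have hexp (x : Ω) : Real.exp (B.indicator (fun _ => Real.log M) x)
      = 1 + B.indicator (fun _ => M - 1) x := by
    by_cases hx : x ∈ B <;> simp [hx, Real.exp_log hM0]
  have hint (ρ : Measure Ω) [IsProbabilityMeasure ρ] (c : ℝ) :
      Integrable (B.indicator fun _ => c) ρ := (integrable_const c).indicator hB
  have hdv := integral_le_toReal_klDiv_add_log_integral_exp hμν (hint μ (Real.log M))
    (by simp only [hexp]; exact (integrable_const 1).add (hint ν (M - 1)))
  simp only [hexp] at hdv
  rw [integral_indicator_const _ hB, integral_add (integrable_const 1) (hint ν (M - 1)),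
    integral_indicator_const _ hB, integral_const, probReal_univ] at hdv
  simp only [smul_eq_mul, mul_one] at hdv
  have hνB0 : 0 ≤ ν.real B := measureReal_nonneg
  have hle_two : 1 + ν.real B * (M - 1) ≤ 2 := by
    have := mul_le_mul_of_nonneg_right hνB hM0.le
    rw [inv_mul_cancel₀ hM0.ne'] at this
    linarith
  have hlog := Real.log_le_log
    (by linarith [mul_nonneg hνB0 (sub_nonneg.2 hM)]) hle_two
  linarith

lemma exists_measureReal_le_inv_card [Fintype ι] [Nonempty ι] (ν : Measure Ω)
    [IsProbabilityMeasure ν] {B : ι → Set Ω} (hB : ∀ i, MeasurableSet (B i))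
    (hdisj : Pairwise (Function.onFun Disjoint B)) :
    ∃ i, ν.real (B i) ≤ (Fintype.card ι : ℝ)⁻¹ := by
  have hsum : ∑ i, ν.real (B i) ≤ ∑ _i : ι, (Fintype.card ι : ℝ)⁻¹ := by
    rw [← measureReal_iUnion_fintype hdisj hB]
    simp
  simpa using Finset.exists_le_of_sum_le Finset.univ_nonempty hsum

lemma exists_measurableSet_subset_measureReal_compl (μ : Measure Ω) [IsProbabilityMeasure μ]
    (s : Set Ω) : ∃ B ⊆ s, MeasurableSet B ∧ μ.real sᶜ = 1 - μ.real B := by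
  refine ⟨(toMeasurable μ sᶜ)ᶜ, Set.compl_subset_comm.1 (subset_toMeasurable μ sᶜ),
    (measurableSet_toMeasurable μ sᶜ).compl, ?_⟩
  rw [probReal_compl_eq_one_sub (measurableSet_toMeasurable μ sᶜ), sub_sub_cancel,
    Measure.real, Measure.real, measure_toMeasurable]

theorem exists_le_measureReal_ne_of_klDiv_ne_top {α : Type*} [Fintype ι]
    (hι : 1 < Fintype.card ι) (μ : ι → Measure Ω) (ν : Measure Ω)
    [∀ i, IsProbabilityMeasure (μ i)] [IsProbabilityMeasure ν] (hμν : ∀ i, klDiv (μ i) ν ≠ ∞)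
    {θ : ι → α} (hθ : Function.Injective θ) (est : Ω → α) :
    ∃ i, 1 - ((klDiv (μ i) ν).toReal + Real.log 2) / Real.log (Fintype.card ι)
      ≤ (μ i).real {ω | est ω ≠ θ i} := by
  have hι' : (1 : ℝ) < Fintype.card ι := by exact_mod_cast hι
  have : Nonempty ι := Fintype.card_pos_iff.1 (by omega)
  choose B hBsub hBmeas hBerr using fun i =>
    exists_measurableSet_subset_measureReal_compl (μ i) {ω | est ω = θ i}
  have hdisj : Pairwise (Function.onFun Disjoint B) := fun i j hij =>
    Set.disjoint_left.2 fun ω hi hj => hij (hθ ((hBsub i hi).symm.trans (hBsub j hj)))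
  obtain ⟨i, hi⟩ := exists_measureReal_le_inv_card ν hBmeas hdisj
  refine ⟨i, ?_⟩
  have hcompl : {ω | est ω ≠ θ i} = {ω | est ω = θ i}ᶜ := rfl
  rw [hcompl, hBerr, sub_le_sub_iff_left, le_div_iff₀ (Real.log_pos hι')]
  exact measureReal_mul_log_le_toReal_klDiv_add_log_two (hμν i) (hBmeas i) hι'.le hi

end Fano

section Gaussian

lemma gaussianReal_tilted_mul (m t : ℝ) {v : ℝ≥0} (hv : v ≠ 0) :
    (gaussianReal m v).tilted (fun x => t * x) = gaussianReal (m + v * t) v := by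
  have hv' : (v : ℝ) ≠ 0 := by exact_mod_cast hv
  have hmgf : ∫ x, Real.exp (t * x) ∂gaussianReal m v = Real.exp (m * t + v * t ^ 2 / 2) :=
    congr_fun mgf_fun_id_gaussianReal t
  rw [Measure.tilted, hmgf, gaussianReal_of_var_ne_zero m hv,
    gaussianReal_of_var_ne_zero _ hv, ← withDensity_mul _ (by fun_prop) (by fun_prop)]
  congr 1
  ext x
  rw [Pi.mul_apply, gaussianPDF, gaussianPDF,
    ← ENNReal.ofReal_mul (gaussianPDFReal_nonneg m v x), gaussianPDFReal, gaussianPDFReal,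
    ← Real.exp_sub, mul_assoc, ← Real.exp_add]
  congr 3
  field_simp
  ring

lemma klDiv_gaussianReal (m m' : ℝ) {v : ℝ≥0} (hv : v ≠ 0) :
    klDiv (gaussianReal m v) (gaussianReal m' v) = ENNReal.ofReal ((m - m') ^ 2 / (2 * v)) := by
  have hv' : (v : ℝ) ≠ 0 := by exact_mod_cast hv
  set t := (m' - m) / v with ht
  have hmgf : ∫ x, Real.exp (t * x) ∂gaussianReal m v = Real.exp (m * t + v * t ^ 2 / 2) :=
    congr_fun mgf_fun_id_gaussianReal t
  have hid : Integrable (fun x : ℝ => x) (gaussianReal m v) :=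
    memLp_one_iff_integrable.1 (memLp_id_gaussianReal 1)
  have htilted : gaussianReal m' v = (gaussianReal m v).tilted (fun x => t * x) := by
    rw [gaussianReal_tilted_mul m t hv, ht, mul_div_cancel₀ _ hv', add_sub_cancel]
  rw [htilted, klDiv_tilted_right_self _ (hid.const_mul t) (integrable_exp_mul_gaussianReal t),
    hmgf, Real.log_exp, integral_const_mul, integral_id_gaussianReal]
  congr 1
  rw [ht]
  field_simp
  ring

variable {p : ℕ}

instance (m : Fin p → ℝ) : IsProbabilityMeasure (gaussPi m) := by
  unfold gaussPi
  infer_instance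

lemma klDiv_gaussPi (m m' : Fin p → ℝ) :
    klDiv (gaussPi m) (gaussPi m') = ENNReal.ofReal (∑ j, (m j - m' j) ^ 2 / 2) := by
  rw [gaussPi, gaussPi, klDiv_pi, ENNReal.ofReal_sum_of_nonneg fun j _ => by positivity]
  simp only [klDiv_gaussianReal _ _ one_ne_zero, NNReal.coe_one, mul_one]

lemma gaussPi_map_neg (m : Fin p → ℝ) :
    (gaussPi m).map (fun x => -x) = gaussPi (fun j => -m j) := by
  have (j : Fin p) : SigmaFinite ((gaussianReal (m j) 1).map fun x => -x) := by
    rw [gaussianReal_map_neg]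
    infer_instance
  rw [gaussPi, gaussPi]
  simp only [← gaussianReal_map_neg]
  exact Measure.pi_map_pi fun j => measurable_neg.aemeasurable

/-- The law of a uniform sign, that is, of the label in the mixture model. -/
def rademacher : Measure ℝ :=
  (2 : ℝ≥0∞)⁻¹ • Measure.dirac 1 + (2 : ℝ≥0∞)⁻¹ • Measure.dirac (-1)

instance : IsProbabilityMeasure rademacher :=
  ⟨by simp [rademacher, ENNReal.inv_two_add_inv_two]⟩

lemma labeledLaw_eq_map_prod_rademacher (m : Fin p → ℝ) :
    labeledLaw m = ((gaussPi m).prod rademacher).map fun z => (z.2 • z.1, z.2) := by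
  have hf : Measurable fun z : (Fin p → ℝ) × ℝ => (z.2 • z.1, z.2) := by fun_prop
  rw [rademacher, Measure.prod_add, Measure.prod_smul_right, Measure.prod_smul_right,
    Measure.prod_dirac, Measure.prod_dirac, Measure.map_add _ _ hf, Measure.map_smul,
    Measure.map_smul, Measure.map_map hf (by fun_prop), Measure.map_map hf (by fun_prop),
    labeledLaw, ← gaussPi_map_neg, Measure.map_map (by fun_prop) (by fun_prop)]
  simp only [Function.comp_def, one_smul, neg_smul]

instance (m : Fin p → ℝ) : IsProbabilityMeasure (labeledLaw m) := by
  rw [labeledLaw_eq_map_prod_rademacher]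
  exact Measure.isProbabilityMeasure_map (by fun_prop)

lemma klDiv_labeledLaw_le (m m' : Fin p → ℝ) :
    klDiv (labeledLaw m) (labeledLaw m') ≤ ENNReal.ofReal (∑ j, (m j - m' j) ^ 2 / 2) := by
  rw [labeledLaw_eq_map_prod_rademacher, labeledLaw_eq_map_prod_rademacher, ← klDiv_gaussPi,
    ← klDiv_prod_right (gaussPi m) (gaussPi m') rademacher]
  exact klDiv_map_le _ _ (by fun_prop)

lemma klDiv_pi_labeledLaw_le (L : ℕ) (m m' : Fin p → ℝ) :
    klDiv (Measure.pi fun _ : Fin L => labeledLaw m) (Measure.pi fun _ : Fin L => labeledLaw m')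
      ≤ ENNReal.ofReal (L * ∑ j, (m j - m' j) ^ 2 / 2) := by
  rw [klDiv_pi, Finset.sum_const, Finset.card_univ, Fintype.card_fin, nsmul_eq_mul,
    ENNReal.ofReal_mul L.cast_nonneg, ENNReal.ofReal_natCast]
  gcongr
  exact klDiv_labeledLaw_le m m'

theorem exists_le_measureReal_labeledLaw_ne {ι α : Type*} [Fintype ι] (L : ℕ)
    (hι : 1 < Fintype.card ι) {m : ι → Fin p → ℝ} {m₀ : Fin p → ℝ} {D : ℝ}
    (hD : ∀ i, ∑ j, (m i j - m₀ j) ^ 2 / 2 ≤ D) {θ : ι → α} (hθ : Function.Injective θ)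
    (est : (Fin L → (Fin p → ℝ) × ℝ) → α) :
    ∃ i, 1 - (L * D + Real.log 2) / Real.log (Fintype.card ι)
      ≤ (Measure.pi fun _ : Fin L => labeledLaw (m i)).real {d | est d ≠ θ i} := by
  have hKL (i : ι) := klDiv_pi_labeledLaw_le L (m i) m₀
  obtain ⟨i, hi⟩ := exists_le_measureReal_ne_of_klDiv_ne_top hι _ _
    (fun i => ne_top_of_le_ne_top ENNReal.ofReal_ne_top (hKL i)) hθ est
  refine ⟨i, le_trans ?_ hi⟩
  gcongr
  refine (ENNReal.toReal_le_of_le_ofReal (by positivity) (hKL i)).trans ?_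
  gcongr
  exact hD i

end Gaussian

section Support

variable {p k : ℕ} {lam : ℝ}

lemma sum_sq_muVec_insert_sub_muVec (hlam : 0 ≤ lam) {T : Finset (Fin p)} {j : Fin p}
    (hj : j ∉ T) :
    ∑ i, (muVec p k lam (insert j T) i - muVec p k lam T i) ^ 2 / 2 = lam / k / 2 := by
  rw [Finset.sum_eq_single_of_mem j (Finset.mem_univ j) fun i _ hij => by simp [muVec, hij]]
  simp [muVec, hj, Real.sq_sqrt (div_nonneg hlam k.cast_nonneg), -Real.sqrt_div']

lemma exists_notMem_le_measureReal_labeledLaw_ne_insert (hlam : 0 ≤ lam) {T : Finset (Fin p)}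
    (hT : 1 < Tᶜ.card) (L : ℕ) (est : (Fin L → (Fin p → ℝ) × ℝ) → Finset (Fin p)) :
    ∃ j ∉ T, 1 - (L * (lam / k / 2) + Real.log 2) / Real.log Tᶜ.card
      ≤ (Measure.pi fun _ : Fin L => labeledLaw (muVec p k lam (insert j T))).real
          {d | est d ≠ insert j T} := by
  have hmem (j : ↥Tᶜ) : (j : Fin p) ∉ T := Finset.mem_compl.1 j.2
  have hinj : Function.Injective fun j : ↥Tᶜ => insert (j : Fin p) T := fun i j hij =>
    Subtype.ext ((Finset.insert_inj (hmem i)).1 hij)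
  obtain ⟨j, hj⟩ := exists_le_measureReal_labeledLaw_ne L (by rwa [Fintype.card_coe])
    (fun j => (sum_sq_muVec_insert_sub_muVec (k := k) hlam (hmem j)).le) hinj est
  rw [Fintype.card_coe] at hj
  exact ⟨j, hmem j, hj⟩

theorem exists_card_eq_le_measureReal_labeledLaw_ne (hlam : 0 ≤ lam) (hk : 0 < k) (hkp : k < p)
    (L : ℕ) (est : (Fin L → (Fin p → ℝ) × ℝ) → Finset (Fin p)) :
    ∃ S : Finset (Fin p), S.card = k ∧
      1 - (L * (lam / k / 2) + Real.log 2) / Real.log ((p : ℝ) - k + 1)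
        ≤ (Measure.pi fun _ : Fin L => labeledLaw (muVec p k lam S)).real {d | est d ≠ S} := by
  obtain ⟨T, -, hT⟩ := Finset.exists_subset_card_eq
    (show k - 1 ≤ (Finset.univ : Finset (Fin p)).card by rw [Finset.card_fin]; omega)
  have hcard : Tᶜ.card = p - k + 1 := by
    rw [Finset.card_compl, hT, Fintype.card_fin]
    omega
  obtain ⟨j, hjT, hj⟩ := exists_notMem_le_measureReal_labeledLaw_ne_insert (k := k) hlam
    (by omega : 1 < Tᶜ.card) L est
  rw [hcard, Nat.cast_add_one, Nat.cast_sub hkp.le] at hj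
  exact ⟨insert j T, by rw [Finset.card_insert_of_notMem hjT]; omega, hj⟩

end Support

/-- Theorem 1: if `L < 2(1-δ) k log(p-k+1) / λ` then for any support
estimator `Ŝ` based on the `L` labeled samples, the worst-case error probability over
`k`-element supports `S` exceeds `δ - log 2 / log (p - k + 1)`. -/
theorem stmt0 (δ : ℝ) (hδ : δ ∈ Set.Ioo (0 : ℝ) 1) (p k L : ℕ) (lam : ℝ)
    (hlam : 0 < lam) (hk : 0 < k) (hkp : k < p)
    (hL : (L : ℝ) < 2 * (1 - δ) * (k : ℝ) / lam * Real.log ((p : ℝ) - (k : ℝ) + 1))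
    (est : (Fin L → (Fin p → ℝ) × ℝ) → Finset (Fin p)) :
    ∃ S : Finset (Fin p), S.card = k ∧
      ((Measure.pi fun _ : Fin L => labeledLaw (muVec p k lam S))
          {d | est d ≠ S}).toReal
        > δ - Real.log 2 / Real.log ((p : ℝ) - (k : ℝ) + 1) := by
  obtain ⟨S, hS, herr⟩ := exists_card_eq_le_measureReal_labeledLaw_ne hlam.le hk hkp L est
  refine ⟨S, hS, lt_of_lt_of_le ?_ herr⟩
  have hkp' : (k : ℝ) < p := by exact_mod_cast hkp
  have hlog : 0 < Real.log ((p : ℝ) - k + 1) := Real.log_pos (by linarith)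
  have hKL : L * (lam / k / 2) / Real.log ((p : ℝ) - k + 1) < 1 - δ := by
    rw [div_lt_iff₀ hlog]
    refine (mul_lt_mul_of_pos_right hL (by positivity)).trans_eq ?_
    field_simp
  rw [add_div]
  linarith
end
end

section
/- Fix δ ∈ (0,1). Let (L₀, n₀, p, k) → ∞ with k/p → 0 be such that L₀ < 2(1−δ)·(k/λ)·log(p−k+1) and n₀ < 2(1−δ)·(k/λ²)·log(p−k+1)·max{1, λ}. Suppose the numbers of labeled and unlabeled samples satisfy L = ⌊q L₀⌋ and n = ⌊(1−q) n₀⌋ for some q ∈ [0,1]. Then for any estimator Ŝ of the support based on D_L ∪ D_n, as p → ∞, max over k-element supports S of P(Ŝ ≠ S) ≥ δ. -/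
open MeasureTheory ProbabilityTheory Filter
open scoped ENNReal NNReal

noncomputable section

/-- The law of one unlabeled sample `x`: equal mixture of `N(μ, I_p)` and `N(-μ, I_p)`. -/
def unlabeledLaw {p : ℕ} (m : Fin p → ℝ) : Measure (Fin p → ℝ) :=
  (2 : ℝ≥0∞)⁻¹ • gaussPi m + (2 : ℝ≥0∞)⁻¹ • gaussPi (fun j => -m j)

/-!
Fix `S₀` with `k - 1` elements. Adding to it one of the `M = p - k + 1` remaining coordinates gives
`M` candidate supports, with mean vectors `c + e` where `c` is common, `e` is orthogonal to `c` and
`‖e‖² = λ / k`. Take the law with mean `c` as reference. The moment of order `1 + s` of the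
likelihood ratio is `exp (s (1 + s) ‖e‖² / 2)` for a labeled sample and at most
`exp (s (1 + s) ‖e‖² min (1, λ) / 2)` for an unlabeled one, and these moments multiply over
independent samples. When `L + n min (1, λ)` is at most `2 (1 - δ) (k / λ) log M`, the choice
`s = δ / 2` makes the total moment `B` at most `M ^ (s (1 + s) (1 - δ))`.

Splitting according to whether the likelihood ratio exceeds `K = M ^ (1 - δ² / 4)` shows that an
event of reference probability `ε` has probability at most `K ε + K ^ (-s) B` under each candidate.
The `M` events of correct recovery are disjoint, so one of them has `ε ≤ 1 / M`, and the worst-case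
error is at least `1 - 2 M ^ (-δ² / 4)`.

For an unlabeled sample `x`, with `y = ⟨c, x⟩` and `z = ⟨e, x⟩`, the likelihood ratio is
`exp (-‖e‖² / 2) (cosh z + θ sinh z)` with `θ = tanh y`. After symmetrization in `z`, its moment
given `y` is at most the interpolation with weights `1 - θ²` and `θ²` between the values at `θ = 0`
and `|θ| = 1`, and `E θ² ≤ min (1, ‖c‖²)` under the reference law.
-/

lemma choose_two_eq (a : ℝ) : Ring.choose a 2 = a * (a - 1) / 2 := by
  simp only [Ring.choose_eq_smul, Nat.factorial_two, Nat.cast_ofNat, descPochhammer_succ_right,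
    descPochhammer_zero, CharP.cast_eq_zero, sub_zero, one_mul, Nat.cast_one,
    Polynomial.smeval_mul, Polynomial.smeval_X, pow_one, Polynomial.smeval_sub,
    Polynomial.smeval_one, pow_zero, one_smul, smul_eq_mul]
  ring

lemma choose_two_mul_nonneg {a : ℝ} (ha₁ : 1 ≤ a) (ha₂ : a ≤ 2) (j : ℕ) :
    0 ≤ Ring.choose a (2 * j) := by
  induction j with
  | zero => simp
  | succ j ih =>
    have hrec : (Nat.choose (2 * j + 2) (2 * j) : ℝ) * Ring.choose a (2 * j + 2)
        = Ring.choose a (2 * j) * ((a - 2 * j) * (a - 2 * j - 1) / 2) := by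
      simpa [choose_two_eq] using Ring.choose_smul_choose a (show 2 * j ≤ 2 * j + 2 by omega)
    have hfac : 0 ≤ (a - 2 * j) * (a - 2 * j - 1) := by
      rcases j with _ | j
      · simp only [CharP.cast_eq_zero, mul_zero, sub_zero]
        nlinarith
      · push_cast
        have : (0 : ℝ) ≤ j := j.cast_nonneg
        nlinarith
    have hchoose : (0 : ℝ) < Nat.choose (2 * j + 2) (2 * j) := by
      exact_mod_cast Nat.choose_pos (by omega)
    refine nonneg_of_mul_nonneg_right ?_ hchoose
    rw [mul_add_one, hrec]
    positivity

lemma hasSum_one_add_rpow (a : ℝ) {x : ℝ} (hx : |x| < 1) :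
    HasSum (fun n : ℕ => Ring.choose a n * x ^ n) ((1 + x) ^ a) := by
  have h := (Real.one_add_rpow_hasFPowerSeriesOnBall_zero (a := a)).hasSum (y := x)
    (by simpa [← ENNReal.ofReal_one, Metric.eball_ofReal] using hx)
  simpa [mul_comm, binomialSeries, FormalMultilinearSeries.coeff_ofScalars] using h

lemma hasSum_one_add_rpow_add_one_sub_rpow (a : ℝ) {x : ℝ} (hx : |x| < 1) :
    HasSum (fun n : ℕ => Ring.choose a n * (x ^ n + (-x) ^ n)) ((1 + x) ^ a + (1 - x) ^ a) := by
  simpa [mul_add, sub_eq_add_neg] using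
    (hasSum_one_add_rpow a hx).add (hasSum_one_add_rpow a (x := -x) (by rwa [abs_neg]))

-- In the binomial series of both sides the odd terms cancel, and the even terms can be compared one
-- by one because their coefficients are nonnegative for `1 ≤ a ≤ 2`.
lemma one_add_mul_rpow_add_one_sub_mul_rpow_le {a θ v : ℝ} (ha₁ : 1 ≤ a) (ha₂ : a ≤ 2)
    (hθ : |θ| ≤ 1) (hv : |v| < 1) :
    (1 + θ * v) ^ a + (1 - θ * v) ^ a
      ≤ 2 * (1 - θ ^ 2) + θ ^ 2 * ((1 + v) ^ a + (1 - v) ^ a) := by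
  have hθv : |θ * v| < 1 := by rw [abs_mul]; nlinarith [abs_nonneg θ, abs_nonneg v]
  have hθsq : θ ^ 2 ≤ 1 := (sq_le_one_iff_abs_le_one θ).2 hθ
  have hright := ((hasSum_one_add_rpow_add_one_sub_rpow a (x := 0) (by simp)).mul_left
    (1 - θ ^ 2)).add ((hasSum_one_add_rpow_add_one_sub_rpow a hv).mul_left (θ ^ 2))
  have hterm : ∀ n : ℕ, Ring.choose a n * ((θ * v) ^ n + (-(θ * v)) ^ n)
      ≤ (1 - θ ^ 2) * (Ring.choose a n * (0 ^ n + (-0) ^ n))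
        + θ ^ 2 * (Ring.choose a n * (v ^ n + (-v) ^ n)) := fun n => by
    rcases n.even_or_odd' with ⟨j, rfl | rfl⟩
    · rcases j with _ | j
      · simp only [mul_zero, pow_zero, Ring.choose_zero_right]
        linarith
      have hpow : (θ * v) ^ (2 * (j + 1)) ≤ θ ^ 2 * v ^ (2 * (j + 1)) := by
        rw [mul_pow, pow_mul θ, pow_succ]
        exact mul_le_mul_of_nonneg_right
          (mul_le_of_le_one_left (sq_nonneg θ) (pow_le_one₀ (sq_nonneg θ) hθsq))
          ((even_two_mul (j + 1)).pow_nonneg v)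
      have hcoef := mul_le_mul_of_nonneg_left hpow (choose_two_mul_nonneg ha₁ ha₂ (j + 1))
      simp only [(even_two_mul (j + 1)).neg_pow, neg_zero, zero_pow (by omega : 2 * (j + 1) ≠ 0)]
      linarith
    · simp only [(odd_two_mul_add_one j).neg_pow, add_neg_cancel, mul_zero, add_zero, le_refl]
  calc (1 + θ * v) ^ a + (1 - θ * v) ^ a
      ≤ (1 - θ ^ 2) * ((1 + 0) ^ a + (1 - 0) ^ a) + θ ^ 2 * ((1 + v) ^ a + (1 - v) ^ a) :=
        hasSum_le hterm (hasSum_one_add_rpow_add_one_sub_rpow a hθv) hright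
    _ = 2 * (1 - θ ^ 2) + θ ^ 2 * ((1 + v) ^ a + (1 - v) ^ a) := by
        rw [add_zero, sub_zero, Real.one_rpow]; ring

lemma cosh_rpow_le_cosh_mul {a : ℝ} (ha : 1 ≤ a) (z : ℝ) :
    Real.cosh z ^ a ≤ Real.cosh (a * z) := by
  calc Real.cosh z ^ a
      = ((1 / 2 : ℝ) • Real.exp z + (1 / 2 : ℝ) • Real.exp (-z)) ^ a := by
        rw [Real.cosh_eq, smul_eq_mul, smul_eq_mul]; congr 1; ring
    _ ≤ (1 / 2 : ℝ) • Real.exp z ^ a + (1 / 2 : ℝ) • Real.exp (-z) ^ a :=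
        (convexOn_rpow ha).2 (Real.exp_pos z).le (Real.exp_pos (-z)).le
          one_half_pos.le one_half_pos.le (add_halves 1)
    _ = Real.cosh (a * z) := by
        rw [← Real.exp_mul, ← Real.exp_mul, Real.cosh_eq, smul_eq_mul, smul_eq_mul]; ring_nf

lemma cosh_add_mul_sinh_rpow_add_le {a θ : ℝ} (ha₁ : 1 ≤ a) (ha₂ : a ≤ 2)
    (hθ : |θ| ≤ 1) (z : ℝ) :
    (Real.cosh z + θ * Real.sinh z) ^ a + (Real.cosh z - θ * Real.sinh z) ^ a
      ≤ 2 * ((1 - θ ^ 2) * Real.cosh z ^ a + θ ^ 2 * Real.cosh (a * z)) := by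
  have hc := Real.cosh_pos z
  have hsinh : Real.sinh z = Real.cosh z * Real.tanh z := by
    rw [Real.tanh_eq_sinh_div_cosh]; field_simp
  have htanh := Real.abs_tanh_lt_one z
  have hθv : |θ * Real.tanh z| ≤ 1 := by
    rw [abs_mul]; exact mul_le_one₀ hθ (abs_nonneg _) htanh.le
  have hfac : ∀ {r : ℝ}, |r| ≤ 1 →
      (Real.cosh z * (1 + r)) ^ a = Real.cosh z ^ a * (1 + r) ^ a := fun hr =>
    Real.mul_rpow hc.le (by linarith [(abs_le.1 hr).1])
  have hexp : Real.cosh z ^ a * ((1 + Real.tanh z) ^ a + (1 - Real.tanh z) ^ a)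
      = 2 * Real.cosh (a * z) := by
    rw [mul_add, sub_eq_add_neg, ← hfac htanh.le, ← hfac (by rw [abs_neg]; exact htanh.le),
      mul_one_add, mul_one_add, mul_neg, ← hsinh, ← sub_eq_add_neg, Real.cosh_add_sinh,
      Real.cosh_sub_sinh, ← Real.exp_mul, ← Real.exp_mul, Real.cosh_eq (a * z)]
    ring_nf
  calc (Real.cosh z + θ * Real.sinh z) ^ a + (Real.cosh z - θ * Real.sinh z) ^ a
      = Real.cosh z ^ a * ((1 + θ * Real.tanh z) ^ a + (1 - θ * Real.tanh z) ^ a) := by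
        rw [mul_add, sub_eq_add_neg 1, ← hfac hθv, ← hfac (by rwa [abs_neg]), hsinh]
        ring_nf
    _ ≤ Real.cosh z ^ a * (2 * (1 - θ ^ 2)
          + θ ^ 2 * ((1 + Real.tanh z) ^ a + (1 - Real.tanh z) ^ a)) := by
        exact mul_le_mul_of_nonneg_left
          (one_add_mul_rpow_add_one_sub_mul_rpow_le ha₁ ha₂ hθ htanh) (by positivity)
    _ = _ := by linear_combination θ ^ 2 * hexp

lemma cosh_add_mul_sinh_pos {θ : ℝ} (hθ : |θ| ≤ 1) (x : ℝ) :
    0 < Real.cosh x + θ * Real.sinh x := by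
  have hsinh : |Real.sinh x| < Real.cosh x :=
    abs_lt.2 ⟨by linarith [Real.cosh_add_sinh x, Real.exp_pos x], Real.sinh_lt_cosh x⟩
  have hmul : |θ * Real.sinh x| ≤ |Real.sinh x| :=
    (abs_mul _ _).trans_le (mul_le_of_le_one_left (abs_nonneg _) hθ)
  linarith [neg_abs_le (θ * Real.sinh x)]

lemma cosh_mul_tanh_sq_add_two_le (x : ℝ) :
    Real.cosh x * Real.tanh x ^ 2 + 2 ≤ 2 * Real.cosh x := by
  have hc := Real.cosh_pos x
  rw [Real.tanh_eq_sinh_div_cosh, div_pow, Real.sinh_sq]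
  field_simp
  linarith [sq_nonneg (Real.cosh x - 1)]

@[fun_prop]
lemma measurable_tanh : Measurable Real.tanh := by
  rw [funext Real.tanh_eq_sinh_div_cosh]
  fun_prop

lemma lintegral_exp_mul_gaussianReal (μ : ℝ) (v : ℝ≥0) (a : ℝ) :
    ∫⁻ x, ENNReal.ofReal (Real.exp (a * x)) ∂gaussianReal μ v
      = ENNReal.ofReal (Real.exp (μ * a + v * a ^ 2 / 2)) := by
  rw [← ofReal_integral_eq_lintegral_ofReal (integrable_exp_mul_gaussianReal a)
    (ae_of_all _ fun x => (Real.exp_pos _).le)]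
  exact congrArg _ (congrFun mgf_id_gaussianReal a)

lemma lintegral_comp_neg_gaussianReal (v : ℝ≥0) {f : ℝ → ℝ≥0∞} (hf : Measurable f) :
    ∫⁻ x, f (-x) ∂gaussianReal 0 v = ∫⁻ x, f x ∂gaussianReal 0 v := by
  rw [← lintegral_map hf measurable_neg, gaussianReal_map_neg, neg_zero]

lemma lintegral_gaussianReal_eq_half_add_comp_neg (v : ℝ≥0) {f : ℝ → ℝ≥0∞} (hf : Measurable f) :
    ∫⁻ x, f x ∂gaussianReal 0 v = ∫⁻ x, 2⁻¹ * (f x + f (-x)) ∂gaussianReal 0 v := by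
  rw [lintegral_const_mul' _ _ (by simp), lintegral_add_left hf,
    lintegral_comp_neg_gaussianReal v hf, ← two_mul, ← mul_assoc,
    ENNReal.inv_mul_cancel two_ne_zero ENNReal.ofNat_ne_top, one_mul]

lemma two_inv_mul_ofReal_add_ofReal {x y : ℝ} (hx : 0 ≤ x) (hy : 0 ≤ y) :
    2⁻¹ * (ENNReal.ofReal x + ENNReal.ofReal y) = ENNReal.ofReal ((x + y) / 2) := by
  rw [← ENNReal.ofReal_add hx hy, ENNReal.ofReal_div_of_pos two_pos, ENNReal.ofReal_ofNat,
    ENNReal.div_eq_inv_mul]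

lemma lintegral_cosh_mul_gaussianReal (v : ℝ≥0) (a : ℝ) :
    ∫⁻ x, ENNReal.ofReal (Real.cosh (a * x)) ∂gaussianReal 0 v
      = ENNReal.ofReal (Real.exp (v * a ^ 2 / 2)) := by
  calc ∫⁻ x, ENNReal.ofReal (Real.cosh (a * x)) ∂gaussianReal 0 v
      = ∫⁻ x, 2⁻¹ * (ENNReal.ofReal (Real.exp (a * x)) + ENNReal.ofReal (Real.exp (a * -x)))
          ∂gaussianReal 0 v := by
        refine lintegral_congr fun x => ?_
        rw [two_inv_mul_ofReal_add_ofReal (Real.exp_pos _).le (Real.exp_pos _).le, mul_neg,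
          Real.cosh_eq]
    _ = ENNReal.ofReal (Real.exp (v * a ^ 2 / 2)) := by
        rw [← lintegral_gaussianReal_eq_half_add_comp_neg v (f := fun x => .ofReal (.exp (a * x)))
          (by fun_prop), lintegral_exp_mul_gaussianReal, zero_mul, zero_add]

lemma lintegral_cosh_gaussianReal (v : ℝ≥0) :
    ∫⁻ x, ENNReal.ofReal (Real.cosh x) ∂gaussianReal 0 v
      = ENNReal.ofReal (Real.exp (v / 2)) := by
  simpa using lintegral_cosh_mul_gaussianReal v 1

lemma lintegral_cosh_sq_gaussianReal (v : ℝ≥0) :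
    ∫⁻ x, ENNReal.ofReal (Real.cosh x ^ 2) ∂gaussianReal 0 v
      = ENNReal.ofReal (Real.exp v * Real.cosh v) := by
  have hsq : ∀ x, ENNReal.ofReal (Real.cosh x ^ 2)
      = 2⁻¹ * (ENNReal.ofReal 1 + ENNReal.ofReal (Real.cosh (2 * x))) := fun x => by
    rw [two_inv_mul_ofReal_add_ofReal zero_le_one (Real.cosh_pos _).le, Real.cosh_two_mul,
      Real.sinh_sq]
    ring_nf
  simp_rw [hsq]
  rw [lintegral_const_mul' _ _ (by simp), lintegral_add_left measurable_const,
    lintegral_cosh_mul_gaussianReal, lintegral_const, measure_univ, mul_one,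
    two_inv_mul_ofReal_add_ofReal zero_le_one (Real.exp_pos _).le, Real.cosh_eq, mul_div_assoc',
    mul_add, ← Real.exp_add, ← Real.exp_add, add_neg_cancel, Real.exp_zero, add_comm]
  ring_nf

-- Hölder interpolation between the moments of order `1` and `2`.
lemma lintegral_cosh_rpow_one_add_le (v : ℝ≥0) {s : ℝ} (hs₀ : 0 ≤ s) (hs₁ : s ≤ 1) :
    ∫⁻ x, ENNReal.ofReal (Real.cosh x ^ (1 + s)) ∂gaussianReal 0 v
      ≤ ENNReal.ofReal (Real.exp ((1 + s) * v / 2 + s * v ^ 2 / 2)) := by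
  have hsplit : ∀ x, ENNReal.ofReal (Real.cosh x ^ (1 + s))
      = ENNReal.ofReal (Real.cosh x) ^ (1 - s) * ENNReal.ofReal (Real.cosh x ^ 2) ^ s := fun x => by
    have hc := Real.cosh_pos x
    rw [ENNReal.ofReal_rpow_of_pos hc, ENNReal.ofReal_rpow_of_pos (by positivity),
      ← ENNReal.ofReal_mul (by positivity), ← Real.rpow_natCast_mul hc.le, ← Real.rpow_add hc]
    norm_num; ring_nf
  calc ∫⁻ x, ENNReal.ofReal (Real.cosh x ^ (1 + s)) ∂gaussianReal 0 v
      ≤ (∫⁻ x, ENNReal.ofReal (Real.cosh x) ∂gaussianReal 0 v) ^ (1 - s)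
        * (∫⁻ x, ENNReal.ofReal (Real.cosh x ^ 2) ∂gaussianReal 0 v) ^ s := by
        simp_rw [hsplit]
        exact ENNReal.lintegral_mul_norm_pow_le (by fun_prop) (by fun_prop)
          (sub_nonneg.2 hs₁) hs₀ (sub_add_cancel 1 s)
    _ = ENNReal.ofReal (Real.exp ((1 + s) * v / 2) * Real.cosh v ^ s) := by
        have hc := Real.cosh_pos v
        rw [lintegral_cosh_gaussianReal, lintegral_cosh_sq_gaussianReal,
          ENNReal.ofReal_rpow_of_pos (Real.exp_pos _), ENNReal.ofReal_rpow_of_pos (by positivity),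
          ← ENNReal.ofReal_mul (by positivity), Real.mul_rpow (Real.exp_pos _).le hc.le,
          ← mul_assoc, ← Real.exp_mul, ← Real.exp_mul, ← Real.exp_add]
        ring_nf
    _ ≤ ENNReal.ofReal (Real.exp ((1 + s) * v / 2 + s * v ^ 2 / 2)) := by
        rw [Real.exp_add, show s * (v : ℝ) ^ 2 / 2 = v ^ 2 / 2 * s by ring, Real.exp_mul _ s]
        gcongr
        exact Real.cosh_le_exp_half_sq v

lemma lintegral_cosh_rpow_one_add_le_min (v : ℝ≥0) {s : ℝ} (hs₀ : 0 ≤ s) (hs₁ : s ≤ 1) :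
    ∫⁻ x, ENNReal.ofReal (Real.cosh x ^ (1 + s)) ∂gaussianReal 0 v
      ≤ ENNReal.ofReal (Real.exp ((1 + s) * v / 2) * Real.exp (s * v / 2 * min (1 + s) v)) := by
  rw [← Real.exp_add]
  rcases min_choice (1 + s) (v : ℝ) with h | h <;> rw [h]
  · calc ∫⁻ x, ENNReal.ofReal (Real.cosh x ^ (1 + s)) ∂gaussianReal 0 v
        ≤ ∫⁻ x, ENNReal.ofReal (Real.cosh ((1 + s) * x)) ∂gaussianReal 0 v := by
          gcongr with x
          exact cosh_rpow_le_cosh_mul (by linarith) x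
      _ = _ := by rw [lintegral_cosh_mul_gaussianReal]; ring_nf
  · exact (lintegral_cosh_rpow_one_add_le v hs₀ hs₁).trans_eq (by ring_nf)

-- The symmetry `x ↦ -x` of the Gaussian is what allows the use of the symmetrized pointwise bound
-- `cosh_add_mul_sinh_rpow_add_le`.
lemma lintegral_cosh_add_mul_sinh_rpow_le (v : ℝ≥0) {s θ : ℝ} (hs₀ : 0 ≤ s) (hs₁ : s ≤ 1)
    (hθ : |θ| ≤ 1) :
    ∫⁻ x, ENNReal.ofReal ((Real.cosh x + θ * Real.sinh x) ^ (1 + s)) ∂gaussianReal 0 v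
      ≤ ENNReal.ofReal (Real.exp ((1 + s) * v / 2) * ((1 - θ ^ 2)
        * Real.exp (s * v / 2 * min (1 + s) v) + θ ^ 2 * Real.exp (s * v / 2 * (1 + s)))) := by
  have hθsq : 0 ≤ 1 - θ ^ 2 := sub_nonneg.2 ((sq_le_one_iff_abs_le_one θ).2 hθ)
  calc ∫⁻ x, ENNReal.ofReal ((Real.cosh x + θ * Real.sinh x) ^ (1 + s)) ∂gaussianReal 0 v
      ≤ ∫⁻ x, (ENNReal.ofReal (1 - θ ^ 2) * ENNReal.ofReal (Real.cosh x ^ (1 + s))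
          + ENNReal.ofReal (θ ^ 2) * ENNReal.ofReal (Real.cosh ((1 + s) * x)))
            ∂gaussianReal 0 v := by
        rw [lintegral_gaussianReal_eq_half_add_comp_neg v (by fun_prop)]
        refine lintegral_mono fun x => ?_
        have := Real.cosh_pos x
        have := Real.cosh_pos ((1 + s) * x)
        rw [two_inv_mul_ofReal_add_ofReal (Real.rpow_nonneg (cosh_add_mul_sinh_pos hθ x).le _)
            (Real.rpow_nonneg (cosh_add_mul_sinh_pos hθ (-x)).le _), ← ENNReal.ofReal_mul hθsq,
          ← ENNReal.ofReal_mul (sq_nonneg θ), ← ENNReal.ofReal_add (by positivity) (by positivity),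
          Real.cosh_neg, Real.sinh_neg, mul_neg, ← sub_eq_add_neg]
        have hsymm := cosh_add_mul_sinh_rpow_add_le (a := 1 + s) (by linarith) (by linarith) hθ x
        exact ENNReal.ofReal_le_ofReal (by linarith)
    _ ≤ ENNReal.ofReal (1 - θ ^ 2) * ENNReal.ofReal
            (Real.exp ((1 + s) * v / 2) * Real.exp (s * v / 2 * min (1 + s) v))
          + ENNReal.ofReal (θ ^ 2) * ENNReal.ofReal
            (Real.exp ((1 + s) * v / 2) * Real.exp (s * v / 2 * (1 + s))) := by
        rw [lintegral_add_left (by fun_prop), lintegral_const_mul _ (by fun_prop),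
          lintegral_const_mul _ (by fun_prop), lintegral_cosh_mul_gaussianReal,
          ← Real.exp_add _ (_ * (1 + s))]
        gcongr
        · exact lintegral_cosh_rpow_one_add_le_min v hs₀ hs₁
        · exact le_of_eq (by ring)
    _ = _ := by
        rw [← ENNReal.ofReal_mul hθsq, ← ENNReal.ofReal_mul (sq_nonneg θ),
          ← ENNReal.ofReal_add (by positivity) (by positivity)]
        ring_nf

lemma lintegral_cosh_mul_tanh_sq_le (v : ℝ≥0) :
    ∫⁻ x, ENNReal.ofReal (Real.cosh x * Real.tanh x ^ 2) ∂gaussianReal 0 v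
      ≤ ENNReal.ofReal (Real.exp (v / 2) * min 1 (v : ℝ)) := by
  rw [mul_min_of_nonneg _ _ (Real.exp_pos _).le, ENNReal.ofReal_min]
  refine le_min ?_ ?_
  · rw [mul_one, ← lintegral_cosh_gaussianReal]
    gcongr with x
    exact mul_le_of_le_one_right (Real.cosh_pos x).le (Real.tanh_sq_lt_one x).le
  · have hadd : ∫⁻ x, ENNReal.ofReal (Real.cosh x * Real.tanh x ^ 2) ∂gaussianReal 0 v
        + ENNReal.ofReal 2 ≤ ENNReal.ofReal (2 * Real.exp (v / 2)) := by
      calc _ = ∫⁻ x, ENNReal.ofReal (Real.cosh x * Real.tanh x ^ 2 + 2) ∂gaussianReal 0 v := by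
            simp_rw [fun x => ENNReal.ofReal_add
              (mul_nonneg (Real.cosh_pos x).le (sq_nonneg (Real.tanh x))) zero_le_two]
            rw [lintegral_add_right _ measurable_const, lintegral_const, measure_univ, mul_one]
        _ ≤ ∫⁻ x, ENNReal.ofReal (2 * Real.cosh x) ∂gaussianReal 0 v := by
            gcongr with x
            exact cosh_mul_tanh_sq_add_two_le x
        _ = _ := by
            simp_rw [ENNReal.ofReal_mul zero_le_two]
            rw [lintegral_const_mul _ (by fun_prop), lintegral_cosh_gaussianReal]
    refine (ENNReal.le_sub_of_add_le_right ENNReal.ofReal_ne_top hadd).trans ?_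
    rw [← ENNReal.ofReal_sub _ zero_le_two]
    refine ENNReal.ofReal_le_ofReal ?_
    have hexp : Real.exp (v / 2 : ℝ) * (1 - v / 2) ≤ 1 := by
      calc _ ≤ Real.exp (v / 2) * Real.exp (-(v / 2)) := by
            gcongr
            exact Real.one_sub_le_exp_neg _
        _ = 1 := by rw [← Real.exp_add, add_neg_cancel, Real.exp_zero]
    linarith

lemma one_add_mul_exp_sub_one_le {m d : ℝ} (hm : 0 ≤ m) (hd₀ : 0 ≤ d) (hd₁ : d ≤ 1) :
    1 + m * (Real.exp d - 1) ≤ Real.exp (m * (d + d ^ 2)) := by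
  have hquad := (abs_le.1 (Real.abs_exp_sub_one_sub_id_le (abs_le.2 ⟨by linarith, hd₁⟩))).2
  calc 1 + m * (Real.exp d - 1) ≤ m * (d + d ^ 2) + 1 := by
        rw [add_comm]
        gcongr
        linarith
    _ ≤ Real.exp (m * (d + d ^ 2)) := Real.add_one_le_exp _

lemma mul_sq_le_of_le_mul {s m v d : ℝ} (hs₀ : 0 ≤ s) (hs₁ : s ≤ 1) (hm₀ : 0 ≤ m) (hm₁ : m ≤ 1)
    (hd₀ : 0 ≤ d) (hd : d ≤ s * v) :
    m * d ^ 2 ≤ (s * v) ^ 2 / 2 + m * (s * v ^ 2) / 2 := by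
  have hss : s ^ 2 ≤ s := by nlinarith
  calc m * d ^ 2 ≤ m * (s * v) ^ 2 := by gcongr
    _ = m * (s * v) ^ 2 / 2 + m * (s ^ 2 * v ^ 2) / 2 := by ring
    _ ≤ 1 * (s * v) ^ 2 / 2 + m * (s * v ^ 2) / 2 := by gcongr
    _ = (s * v) ^ 2 / 2 + m * (s * v ^ 2) / 2 := by ring

lemma exp_add_sub_mul_min_le {s m v : ℝ} (hs₀ : 0 ≤ s) (hs₁ : s ≤ 1) (hm : 0 ≤ m) (hv : 0 ≤ v) :
    Real.exp (s * v / 2 * min (1 + s) v) + (Real.exp (s * v / 2 * (1 + s))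
        - Real.exp (s * v / 2 * min (1 + s) v)) * min 1 m
      ≤ Real.exp (s * v / 2 * ((1 + s) * min 1 (m + v))) := by
  rcases le_total 1 (m + v) with h | h
  · have hexp : Real.exp (s * v / 2 * min (1 + s) v) ≤ Real.exp (s * v / 2 * (1 + s)) :=
      Real.exp_le_exp.2 (mul_le_mul_of_nonneg_left (min_le_left _ _) (by positivity))
    rw [min_eq_left h, mul_one]
    nlinarith [min_le_left 1 m]
  · rw [min_eq_right (by linarith : v ≤ 1 + s), min_eq_right (by linarith : m ≤ 1),
      min_eq_right h]
    set d := s * v * (1 + s - v) / 2 with hd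
    have hsv₀ : 0 ≤ s * v := mul_nonneg hs₀ hv
    have hd₀ : 0 ≤ d := div_nonneg (mul_nonneg hsv₀ (by linarith)) two_pos.le
    have hd_le : d ≤ s * v := by nlinarith
    calc Real.exp (s * v / 2 * v)
          + (Real.exp (s * v / 2 * (1 + s)) - Real.exp (s * v / 2 * v)) * m
        = Real.exp (s * v / 2 * v) * (1 + m * (Real.exp d - 1)) := by
          rw [show s * v / 2 * (1 + s) = s * v / 2 * v + d by rw [hd]; ring, Real.exp_add]
          ring
      _ ≤ Real.exp (s * v / 2 * v) * Real.exp (m * (d + d ^ 2)) := by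
          gcongr
          exact one_add_mul_exp_sub_one_le hm hd₀ (by nlinarith)
      _ ≤ Real.exp (s * v / 2 * ((1 + s) * (m + v))) := by
          rw [← Real.exp_add, Real.exp_le_exp]
          linear_combination mul_sq_le_of_le_mul hs₀ hs₁ hm (by linarith) hd₀ hd_le + m * hd

lemma lintegral_exp_mul_cosh_add_mul_sinh_rpow_le (v : ℝ≥0) {s θ : ℝ} (hs₀ : 0 ≤ s) (hs₁ : s ≤ 1)
    (hθ : |θ| ≤ 1) :
    ∫⁻ x, ENNReal.ofReal (Real.exp (-v / 2) * (Real.cosh x + θ * Real.sinh x)) ^ (1 + s)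
        ∂gaussianReal 0 v
      ≤ ENNReal.ofReal ((1 - θ ^ 2) * Real.exp (s * v / 2 * min (1 + s) v)
        + θ ^ 2 * Real.exp (s * v / 2 * (1 + s))) := by
  have hscale : ∀ x, ENNReal.ofReal (Real.exp (-v / 2) * (Real.cosh x + θ * Real.sinh x)) ^ (1 + s)
      = ENNReal.ofReal (Real.exp (-((1 + s) * v / 2)))
        * ENNReal.ofReal ((Real.cosh x + θ * Real.sinh x) ^ (1 + s)) := fun x => by
    have hpos := cosh_add_mul_sinh_pos hθ x
    rw [ENNReal.ofReal_rpow_of_pos (by positivity), ← ENNReal.ofReal_mul (Real.exp_pos _).le,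
      Real.mul_rpow (Real.exp_pos _).le hpos.le, ← Real.exp_mul]
    ring_nf
  simp_rw [hscale]
  rw [lintegral_const_mul _ (by fun_prop)]
  refine (mul_le_mul_right (lintegral_cosh_add_mul_sinh_rpow_le v hs₀ hs₁ hθ) _).trans_eq ?_
  rw [← ENNReal.ofReal_mul (Real.exp_pos _).le, ← mul_assoc, ← Real.exp_add, neg_add_cancel,
    Real.exp_zero, one_mul]

-- `y` and `z` play the roles of the inner products of an unlabeled sample with the reference mean
-- and with the orthogonal perturbation; `tanh y` is the posterior mean of the missing label.
lemma lintegral_cosh_mul_likelihoodRatio_rpow_le (m v : ℝ≥0) {s : ℝ} (hs₀ : 0 ≤ s) (hs₁ : s ≤ 1) :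
    ∫⁻ y, ENNReal.ofReal (Real.exp (-m / 2) * Real.cosh y)
        * ∫⁻ z, ENNReal.ofReal (Real.exp (-v / 2) * (Real.cosh z + Real.tanh y * Real.sinh z))
          ^ (1 + s) ∂gaussianReal 0 v ∂gaussianReal 0 m
      ≤ ENNReal.ofReal (Real.exp (s * v / 2 * ((1 + s) * min 1 (m + v : ℝ)))) := by
  set A := Real.exp (s * v / 2 * min (1 + s) v)
  set B := Real.exp (s * v / 2 * (1 + s))
  have hAB : 0 ≤ B - A := sub_nonneg.2 <| Real.exp_le_exp.2 <|
    mul_le_mul_of_nonneg_left (min_le_left _ _) (by positivity)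
  calc _ ≤ ∫⁻ y, (ENNReal.ofReal (Real.exp (-m / 2) * A) * ENNReal.ofReal (Real.cosh y)
          + ENNReal.ofReal (Real.exp (-m / 2) * (B - A))
            * ENNReal.ofReal (Real.cosh y * Real.tanh y ^ 2)) ∂gaussianReal 0 m := by
        refine lintegral_mono fun y => (mul_le_mul_right
          (lintegral_exp_mul_cosh_add_mul_sinh_rpow_le v hs₀ hs₁ (Real.abs_tanh_lt_one y).le)
          _).trans_eq ?_
        have := Real.cosh_pos y
        rw [← ENNReal.ofReal_mul (by positivity), ← ENNReal.ofReal_mul (by positivity),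
          ← ENNReal.ofReal_mul (by positivity),
          ← ENNReal.ofReal_add (by positivity) (by positivity)]
        congr 1
        ring
    _ ≤ ENNReal.ofReal (Real.exp (-m / 2) * A) * ENNReal.ofReal (Real.exp (m / 2))
          + ENNReal.ofReal (Real.exp (-m / 2) * (B - A))
            * ENNReal.ofReal (Real.exp (m / 2) * min 1 (m : ℝ)) := by
        rw [lintegral_add_left (by fun_prop), lintegral_const_mul _ (by fun_prop),
          lintegral_const_mul' _ _ ENNReal.ofReal_ne_top, lintegral_cosh_gaussianReal]
        gcongr
        exact lintegral_cosh_mul_tanh_sq_le m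
    _ = ENNReal.ofReal (A + (B - A) * min 1 (m : ℝ)) := by
        have hexp : Real.exp (-m / 2) * Real.exp (m / 2) = 1 := by
          rw [← Real.exp_add, neg_div, neg_add_cancel, Real.exp_zero]
        rw [← ENNReal.ofReal_mul (by positivity), ← ENNReal.ofReal_mul (by positivity),
          ← ENNReal.ofReal_add (by positivity) (by positivity)]
        congr 1
        linear_combination (A + (B - A) * min 1 (m : ℝ)) * hexp
    _ ≤ _ := ENNReal.ofReal_le_ofReal (exp_add_sub_mul_min_le hs₀ hs₁ m.2 v.2)

section ProductDensity

variable {ι : Type*} [Fintype ι] {α : ι → Type*} [∀ i, MeasurableSpace (α i)]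

lemma lintegral_pi_prod_eq_prod_lintegral (Q : ∀ i, Measure (α i)) [∀ i, IsProbabilityMeasure (Q i)]
    {f : ∀ i, α i → ℝ≥0∞} (hf : ∀ i, Measurable (f i)) :
    ∫⁻ x, ∏ i, f i (x i) ∂Measure.pi Q = ∏ i, ∫⁻ x, f i x ∂Q i := by
  rw [lintegral_prod_eq_prod_lintegral_of_indepFun Finset.univ _
    (iIndepFun_pi fun i => (hf i).aemeasurable) fun i => (hf i).comp (measurable_pi_apply i)]
  exact Finset.prod_congr rfl fun i _ => (measurePreserving_eval Q i).lintegral_comp (hf i)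

lemma pi_withDensity (Q : ∀ i, Measure (α i)) [∀ i, IsProbabilityMeasure (Q i)]
    {f : ∀ i, α i → ℝ≥0∞} (hf : ∀ i, Measurable (f i))
    [∀ i, SigmaFinite ((Q i).withDensity (f i))] :
    Measure.pi (fun i => (Q i).withDensity (f i))
      = (Measure.pi Q).withDensity fun x => ∏ i, f i (x i) := by
  refine Measure.pi_eq fun t ht => ?_
  have hind : ∀ x : ∀ i, α i, (Set.univ.pi t).indicator (fun x => ∏ i, f i (x i)) x
      = ∏ i, (t i).indicator (f i) (x i) := fun x => by
    by_cases hx : x ∈ Set.univ.pi t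
    · rw [Set.indicator_of_mem hx]
      exact Finset.prod_congr rfl fun i _ => (Set.indicator_of_mem (hx i trivial) _).symm
    · obtain ⟨i, hi⟩ : ∃ i, x i ∉ t i := by simpa using hx
      rw [Set.indicator_of_notMem hx,
        Finset.prod_eq_zero (Finset.mem_univ i) (Set.indicator_of_notMem hi _)]
  rw [withDensity_apply _ (.univ_pi ht), ← lintegral_indicator (.univ_pi ht)]
  simp_rw [hind]
  rw [lintegral_pi_prod_eq_prod_lintegral Q fun i => (hf i).indicator (ht i)]
  exact Finset.prod_congr rfl fun i _ => by
    rw [lintegral_indicator (ht i), withDensity_apply _ (ht i)]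

lemma map_withDensity_comp {β γ : Type*} [MeasurableSpace β] [MeasurableSpace γ] (μ : Measure β)
    {g : β → γ} (hg : Measurable g) {f : γ → ℝ≥0∞} (hf : Measurable f) :
    (μ.withDensity (f ∘ g)).map g = (μ.map g).withDensity f := by
  ext t ht
  rw [Measure.map_apply hg ht, withDensity_apply _ (hg ht), withDensity_apply _ ht,
    setLIntegral_map ht hf hg]
  rfl

end ProductDensity

section GaussianVector

open scoped Matrix

variable {p : ℕ}

instance inst_s3 (m : Fin p → ℝ) : IsProbabilityMeasure (gaussPi m) := by
  unfold gaussPi; infer_instance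

@[fun_prop]
lemma measurable_dotProduct_right (c : Fin p → ℝ) : Measurable fun x : Fin p → ℝ => c ⬝ᵥ x := by
  unfold dotProduct; fun_prop

lemma measurePreserving_eval_gaussPi (m : Fin p → ℝ) (i : Fin p) :
    MeasurePreserving (fun x : Fin p → ℝ => x i) (gaussPi m) (gaussianReal (m i) 1) :=
  measurePreserving_eval _ i

lemma hasGaussianLaw_id_gaussPi (m : Fin p → ℝ) : HasGaussianLaw (fun x => x) (gaussPi m) := by
  have heval : ∀ i, HasGaussianLaw (fun x : Fin p → ℝ => x i) (gaussPi m) := fun i =>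
    ⟨by rw [(measurePreserving_eval_gaussPi m i).map_eq]; infer_instance⟩
  exact iIndepFun.hasGaussianLaw heval (iIndepFun_pi fun _ => aemeasurable_id)

lemma hasGaussianLaw_dotProduct_prodMk_gaussPi (m c e : Fin p → ℝ) :
    HasGaussianLaw (fun x => (c ⬝ᵥ x, e ⬝ᵥ x)) (gaussPi m) :=
  (hasGaussianLaw_id_gaussPi m).map_fun
    ((dotProductBilin ℝ ℝ c).prod (dotProductBilin ℝ ℝ e)).toContinuousLinearMap

lemma integral_dotProduct_gaussPi (m c : Fin p → ℝ) : ∫ x, c ⬝ᵥ x ∂gaussPi m = c ⬝ᵥ m := by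
  have heval : ∀ i, ∫ x : Fin p → ℝ, x i ∂gaussPi m = m i := fun i => by
    rw [gaussPi, integral_eval, integral_id_gaussianReal]
  simp only [dotProduct]
  rw [integral_finsetSum _ fun i _ =>
    ((hasGaussianLaw_id_gaussPi m).eval i).integrable.const_mul _]
  simp_rw [integral_const_mul, heval]

lemma covariance_dotProduct_gaussPi (m c e : Fin p → ℝ) :
    cov[fun x => c ⬝ᵥ x, fun x => e ⬝ᵥ x; gaussPi m] = c ⬝ᵥ e := by
  have hmem : ∀ i, MemLp (fun x : Fin p → ℝ => x i) 2 (gaussPi m) := fun i =>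
    ((hasGaussianLaw_id_gaussPi m).eval i).memLp_two
  have hcov : ∀ i j, cov[fun x : Fin p → ℝ => x i, fun x => x j; gaussPi m]
      = if i = j then 1 else 0 := fun i j => by
    split_ifs with h
    · subst h
      rw [covariance_self (measurable_pi_apply i).aemeasurable,
        (measurePreserving_eval_gaussPi m i).variance_fun_comp (f := fun x => x) aemeasurable_id,
        variance_fun_id_gaussianReal, NNReal.coe_one]
    · exact ((iIndepFun_pi fun _ => aemeasurable_id).indepFun h).covariance_eq_zero
        (hmem i) (hmem j)
  simp only [dotProduct]
  rw [covariance_fun_sum_fun_sum (fun i => (hmem i).const_mul _) fun i => (hmem i).const_mul _]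
  simp only [covariance_const_mul_right, covariance_const_mul_left, hcov, mul_ite, mul_one,
    mul_zero, Finset.sum_ite_eq, Finset.mem_univ, ↓reduceIte]
  exact Finset.sum_congr rfl fun i _ => mul_comm _ _

lemma map_dotProduct_gaussPi (m c : Fin p → ℝ) :
    (gaussPi m).map (fun x => c ⬝ᵥ x) = gaussianReal (c ⬝ᵥ m) (c ⬝ᵥ c).toNNReal := by
  rw [(hasGaussianLaw_dotProduct_prodMk_gaussPi m c c).fst.map_eq_gaussianReal,
    integral_dotProduct_gaussPi, ← covariance_self (by fun_prop), covariance_dotProduct_gaussPi]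

lemma map_dotProduct_prodMk_gaussPi (m : Fin p → ℝ) {c e : Fin p → ℝ} (hce : c ⬝ᵥ e = 0) :
    (gaussPi m).map (fun x => (c ⬝ᵥ x, e ⬝ᵥ x))
      = (gaussianReal (c ⬝ᵥ m) (c ⬝ᵥ c).toNNReal).prod
          (gaussianReal (e ⬝ᵥ m) (e ⬝ᵥ e).toNNReal) := by
  have hindep := (hasGaussianLaw_dotProduct_prodMk_gaussPi m c e).indepFun_of_covariance_eq_zero
    ((covariance_dotProduct_gaussPi m c e).trans hce)
  rw [(indepFun_iff_map_prod_eq_prod_map_map (by fun_prop) (by fun_prop)).1 hindep,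
    map_dotProduct_gaussPi, map_dotProduct_gaussPi]

lemma lintegral_exp_dotProduct_gaussPi (m c : Fin p → ℝ) :
    ∫⁻ x, ENNReal.ofReal (Real.exp (c ⬝ᵥ x)) ∂gaussPi m
      = ENNReal.ofReal (Real.exp (c ⬝ᵥ m + c ⬝ᵥ c / 2)) := by
  have h := lintegral_exp_mul_gaussianReal (c ⬝ᵥ m) (c ⬝ᵥ c).toNNReal 1
  rw [← map_dotProduct_gaussPi, lintegral_map (by fun_prop) (by fun_prop)] at h
  have hcc : 0 ≤ c ⬝ᵥ c := by simpa using dotProduct_star_self_nonneg c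
  simpa [Real.coe_toNNReal _ hcc] using h

lemma gaussianReal_eq_withDensity (μ : ℝ) : gaussianReal μ 1
    = (gaussianReal 0 1).withDensity fun x => ENNReal.ofReal (Real.exp (μ * x - μ ^ 2 / 2)) := by
  rw [gaussianReal_of_var_ne_zero _ one_ne_zero, gaussianReal_of_var_ne_zero _ one_ne_zero,
    ← withDensity_mul _ (by fun_prop) (by fun_prop)]
  congr 1 with x
  simp only [gaussianPDF, gaussianPDFReal, Pi.mul_apply]
  rw [← ENNReal.ofReal_mul (by positivity), mul_assoc (_)⁻¹, ← Real.exp_add, NNReal.coe_one]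
  ring_nf

lemma gaussPi_eq_withDensity (m : Fin p → ℝ) : gaussPi m
    = (gaussPi 0).withDensity fun x => ENNReal.ofReal (Real.exp (m ⬝ᵥ x - m ⬝ᵥ m / 2)) := by
  have hmarg := fun j => (gaussianReal_eq_withDensity (m j)).symm
  have : ∀ j, SigmaFinite ((gaussianReal 0 1).withDensity fun x =>
      ENNReal.ofReal (Real.exp (m j * x - m j ^ 2 / 2))) := fun j => by
    rw [hmarg]; infer_instance
  have h := pi_withDensity (fun _ : Fin p => gaussianReal 0 1)
    (f := fun j x => ENNReal.ofReal (Real.exp (m j * x - m j ^ 2 / 2))) (fun j => by fun_prop)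
  simp_rw [hmarg] at h
  rw [gaussPi, h]
  congr 1 with x
  rw [← ENNReal.ofReal_prod_of_nonneg fun _ _ => (Real.exp_pos _).le, ← Real.exp_sum,
    Finset.sum_sub_distrib, ← Finset.sum_div]
  simp only [dotProduct, sq]

lemma gaussPi_add_eq_withDensity {c e : Fin p → ℝ} (hce : c ⬝ᵥ e = 0) : gaussPi (c + e)
    = (gaussPi c).withDensity fun x => ENNReal.ofReal (Real.exp (e ⬝ᵥ x - e ⬝ᵥ e / 2)) := by
  rw [gaussPi_eq_withDensity (c + e), gaussPi_eq_withDensity c,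
    ← withDensity_mul _ (by fun_prop) (by fun_prop)]
  congr 1 with x
  rw [Pi.mul_apply, ← ENNReal.ofReal_mul (Real.exp_pos _).le, ← Real.exp_add]
  simp only [add_dotProduct, dotProduct_add, dotProduct_comm e c, hce]
  ring_nf

end GaussianVector

section DensityMoment

/-- `P` has a density with respect to `Q` whose moment of order `1 + s` under `Q` is at most `B`.
For `0 < s` this says that the Rényi divergence of order `1 + s` of `P` from `Q` is at most
`s⁻¹ * log B`. -/
def HasDensityMomentLE {α : Type*} [MeasurableSpace α] (s : ℝ) (P Q : Measure α) (B : ℝ≥0∞) :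
    Prop :=
  ∃ R : α → ℝ≥0∞, Measurable R ∧ P = Q.withDensity R ∧ ∫⁻ x, R x ^ (1 + s) ∂Q ≤ B

namespace HasDensityMomentLE

lemma pi {ι : Type*} [Fintype ι] {α : ι → Type*} [∀ i, MeasurableSpace (α i)] {s : ℝ}
    (hs : 0 ≤ 1 + s) {P Q : ∀ i, Measure (α i)} [∀ i, SigmaFinite (P i)]
    [∀ i, IsProbabilityMeasure (Q i)] {B : ι → ℝ≥0∞}
    (h : ∀ i, HasDensityMomentLE s (P i) (Q i) (B i)) :
    HasDensityMomentLE s (Measure.pi P) (Measure.pi Q) (∏ i, B i) := by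
  choose R hR hP hB using h
  obtain rfl : P = fun i => (Q i).withDensity (R i) := funext hP
  refine ⟨fun x => ∏ i, R i (x i), by fun_prop, pi_withDensity Q hR, ?_⟩
  simp_rw [← ENNReal.prod_rpow_of_nonneg hs]
  rw [lintegral_pi_prod_eq_prod_lintegral Q fun i => (hR i).pow_const (1 + s)]
  exact Finset.prod_le_prod' fun i _ => hB i

variable {α β : Type*} [MeasurableSpace α] [MeasurableSpace β] {s : ℝ} {P Q : Measure α}
  {P' Q' : Measure β} {B B' : ℝ≥0∞}

lemma prod [SFinite P'] [SFinite Q] [SFinite Q'] (hs : 0 ≤ 1 + s)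
    (h : HasDensityMomentLE s P Q B) (h' : HasDensityMomentLE s P' Q' B') :
    HasDensityMomentLE s (P.prod P') (Q.prod Q') (B * B') := by
  obtain ⟨R, hR, rfl, hB⟩ := h
  obtain ⟨R', hR', rfl, hB'⟩ := h'
  refine ⟨fun x => R x.1 * R' x.2, by fun_prop, prod_withDensity hR hR', ?_⟩
  simp_rw [ENNReal.mul_rpow_of_nonneg _ _ hs]
  rw [lintegral_prod_mul (hR.pow_const _).aemeasurable (hR'.pow_const _).aemeasurable]
  exact mul_le_mul' hB hB'

lemma measure_le (hs : 0 ≤ s) (h : HasDensityMomentLE s P Q B) {K : ℝ} (hK : 0 < K) {A : Set α}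
    (hA : MeasurableSet A) :
    P A ≤ ENNReal.ofReal K * Q A + ENNReal.ofReal (K ^ (-s)) * B := by
  obtain ⟨R, hR, rfl, hB⟩ := h
  have hsplit : ∀ x, R x ≤ ENNReal.ofReal K + ENNReal.ofReal (K ^ (-s)) * R x ^ (1 + s) := by
    intro x
    rcases le_total (R x) (ENNReal.ofReal K) with h | h
    · exact le_add_right h
    · refine le_add_left ?_
      calc R x = ENNReal.ofReal (K ^ (-s)) * ENNReal.ofReal K ^ s * R x := by
            rw [ENNReal.ofReal_rpow_of_pos hK, ← ENNReal.ofReal_mul (by positivity),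
              ← Real.rpow_add hK, neg_add_cancel, Real.rpow_zero, ENNReal.ofReal_one, one_mul]
        _ ≤ ENNReal.ofReal (K ^ (-s)) * R x ^ s * R x := by gcongr
        _ = ENNReal.ofReal (K ^ (-s)) * R x ^ (1 + s) := by
            rw [mul_assoc, add_comm, ENNReal.rpow_add_of_nonneg _ _ hs zero_le_one,
              ENNReal.rpow_one]
  calc Q.withDensity R A = ∫⁻ x in A, R x ∂Q := withDensity_apply _ hA
    _ ≤ ∫⁻ x in A, (ENNReal.ofReal K + ENNReal.ofReal (K ^ (-s)) * R x ^ (1 + s)) ∂Q :=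
        lintegral_mono hsplit
    _ = ENNReal.ofReal K * Q A + ENNReal.ofReal (K ^ (-s)) * ∫⁻ x in A, R x ^ (1 + s) ∂Q := by
        rw [lintegral_add_left measurable_const, lintegral_const_mul _ (hR.pow_const _),
          setLIntegral_const]
    _ ≤ ENNReal.ofReal K * Q A + ENNReal.ofReal (K ^ (-s)) * B := by
        gcongr
        exact (setLIntegral_le_lintegral _ _).trans hB

end HasDensityMomentLE

variable {α ι : Type*} [MeasurableSpace α]

lemma exists_measureReal_le_inv_card_s3 (Q : Measure α) [IsProbabilityMeasure Q] {T : Finset ι}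
    (hT : T.Nonempty) {A : ι → Set α} (hA : ∀ i ∈ T, MeasurableSet (A i))
    (hdisj : (T : Set ι).PairwiseDisjoint A) : ∃ i ∈ T, Q.real (A i) ≤ (T.card : ℝ)⁻¹ := by
  refine Finset.exists_le_of_sum_le hT ?_
  rw [← measureReal_biUnion_finset hdisj hA, Finset.sum_const, nsmul_eq_mul,
    mul_inv_cancel₀ (Nat.cast_ne_zero.2 hT.card_ne_zero)]
  exact measureReal_le_one

-- `est` need not be measurable, so the success events are replaced by measurable subsets of the
-- same probability; these stay disjoint.
lemma HasDensityMomentLE.exists_error_ge {s : ℝ} (hs : 0 ≤ s) {T : Finset ι} (hT : T.Nonempty)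
    {P : ι → Measure α} [∀ i, IsProbabilityMeasure (P i)] {Q : Measure α}
    [IsProbabilityMeasure Q] {B : ℝ} (hB : 0 ≤ B)
    (h : ∀ i ∈ T, HasDensityMomentLE s (P i) Q (ENNReal.ofReal B)) {K : ℝ} (hK : 0 < K)
    (est : α → ι) :
    ∃ i ∈ T, 1 - (K / T.card + K ^ (-s) * B) ≤ (P i).real {x | est x ≠ i} := by
  let E : ι → Set α := fun i => toMeasurable (P i) {x | est x ≠ i}
  have hE : ∀ i, MeasurableSet (E i) := fun i => measurableSet_toMeasurable _ _
  have hest : ∀ {i x}, x ∈ (E i)ᶜ → est x = i := fun hx =>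
    by_contra fun hne => hx (subset_toMeasurable _ _ hne)
  obtain ⟨i, hi, hQ⟩ := exists_measureReal_le_inv_card_s3 Q hT (A := fun i => (E i)ᶜ)
    (fun i _ => (hE i).compl) fun i _ j _ hij =>
      Set.disjoint_left.2 fun x hx hx' => hij ((hest hx).symm.trans (hest hx'))
  refine ⟨i, hi, ?_⟩
  have hP : (P i).real (E i)ᶜ ≤ K * Q.real (E i)ᶜ + K ^ (-s) * B := by
    have hle := ENNReal.toReal_mono (by finiteness) ((h i hi).measure_le hs hK (hE i).compl)
    rwa [ENNReal.toReal_add (by finiteness) (by finiteness), ENNReal.toReal_mul,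
      ENNReal.toReal_mul, ENNReal.toReal_ofReal hK.le, ENNReal.toReal_ofReal (by positivity),
      ENNReal.toReal_ofReal hB] at hle
  have herr : (P i).real (E i) = (P i).real {x | est x ≠ i} :=
    congrArg ENNReal.toReal (measure_toMeasurable _)
  rw [probReal_compl_eq_one_sub (hE i), herr] at hP
  have hKQ : K * Q.real (E i)ᶜ ≤ K / T.card := by
    rw [div_eq_mul_inv]; gcongr
  linarith

end DensityMoment

section MixtureLaws

open scoped Matrix

variable {p : ℕ}

lemma labeledLaw_eq_map_add_map_neg (m : Fin p → ℝ) : labeledLaw m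
    = (2 : ℝ≥0∞)⁻¹ • (gaussPi m).map (fun x => (x, (1 : ℝ)))
      + (2 : ℝ≥0∞)⁻¹ • (gaussPi (-m)).map (fun x => (x, (-1 : ℝ))) :=
  rfl

lemma lintegral_labeledLaw (m : Fin p → ℝ) {f : (Fin p → ℝ) × ℝ → ℝ≥0∞} (hf : Measurable f) :
    ∫⁻ d, f d ∂labeledLaw m
      = 2⁻¹ * (∫⁻ x, f (x, 1) ∂gaussPi m + ∫⁻ x, f (x, -1) ∂gaussPi (-m)) := by
  rw [labeledLaw_eq_map_add_map_neg, lintegral_add_measure, lintegral_smul_measure,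
    lintegral_smul_measure, ← smul_add, smul_eq_mul, lintegral_map hf (by fun_prop),
    lintegral_map hf (by fun_prop)]

instance inst_s3_2 (m : Fin p → ℝ) : IsProbabilityMeasure (labeledLaw m) :=
  ⟨by rw [← lintegral_one, lintegral_labeledLaw m measurable_const]
      simp [one_add_one_eq_two, ENNReal.inv_mul_cancel]⟩

instance (m : Fin p → ℝ) : IsProbabilityMeasure (unlabeledLaw m) :=
  ⟨by simp [unlabeledLaw, ENNReal.inv_two_add_inv_two]⟩

lemma labeledLaw_add_eq_withDensity {c e : Fin p → ℝ} (hce : c ⬝ᵥ e = 0) : labeledLaw (c + e)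
    = (labeledLaw c).withDensity
      fun d => ENNReal.ofReal (Real.exp (d.2 * (e ⬝ᵥ d.1) - e ⬝ᵥ e / 2)) := by
  rw [labeledLaw_eq_map_add_map_neg c, withDensity_add_measure, withDensity_smul_measure,
    withDensity_smul_measure, ← map_withDensity_comp _ (by fun_prop) (by fun_prop),
    ← map_withDensity_comp _ (by fun_prop) (by fun_prop), labeledLaw_eq_map_add_map_neg, neg_add,
    gaussPi_add_eq_withDensity hce,
    gaussPi_add_eq_withDensity (c := -c) (e := -e) (by simpa using hce)]
  simp [Function.comp_def]

lemma lintegral_exp_dotProduct_rpow_gaussPi {s : ℝ} {c e : Fin p → ℝ} (hce : c ⬝ᵥ e = 0) :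
    ∫⁻ x, ENNReal.ofReal (Real.exp (e ⬝ᵥ x - e ⬝ᵥ e / 2)) ^ (1 + s) ∂gaussPi c
      = ENNReal.ofReal (Real.exp (s * (1 + s) * (e ⬝ᵥ e) / 2)) := by
  have hpow : ∀ x, ENNReal.ofReal (Real.exp (e ⬝ᵥ x - e ⬝ᵥ e / 2)) ^ (1 + s)
      = ENNReal.ofReal (Real.exp (-((1 + s) * (e ⬝ᵥ e) / 2)))
        * ENNReal.ofReal (Real.exp (((1 + s) • e) ⬝ᵥ x)) := fun x => by
    rw [ENNReal.ofReal_rpow_of_pos (Real.exp_pos _), ← ENNReal.ofReal_mul (Real.exp_pos _).le,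
      ← Real.exp_mul, ← Real.exp_add, smul_dotProduct, smul_eq_mul]
    ring_nf
  simp_rw [hpow]
  rw [lintegral_const_mul _ (by fun_prop), lintegral_exp_dotProduct_gaussPi,
    ← ENNReal.ofReal_mul (Real.exp_pos _).le, ← Real.exp_add]
  simp only [smul_dotProduct, dotProduct_smul, dotProduct_comm e c, hce, smul_eq_mul]
  ring_nf

lemma hasDensityMomentLE_labeledLaw (s : ℝ) {c e : Fin p → ℝ} (hce : c ⬝ᵥ e = 0) :
    HasDensityMomentLE s (labeledLaw (c + e)) (labeledLaw c)
      (ENNReal.ofReal (Real.exp (s * (1 + s) * (e ⬝ᵥ e) / 2))) := by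
  refine ⟨_, by fun_prop, labeledLaw_add_eq_withDensity hce, ?_⟩
  have hpos := lintegral_exp_dotProduct_rpow_gaussPi (s := s) hce
  have hneg := lintegral_exp_dotProduct_rpow_gaussPi (s := s) (c := -c) (e := -e) (by simpa)
  rw [lintegral_labeledLaw c (by fun_prop)]
  simp only [one_mul, neg_one_mul, ← neg_dotProduct]
  rw [neg_dotProduct_neg] at hneg
  rw [hpos, hneg, ← two_mul, ← mul_assoc, ENNReal.inv_mul_cancel two_ne_zero ENNReal.ofNat_ne_top,
    one_mul]

lemma unlabeledLaw_eq_withDensity (m : Fin p → ℝ) : unlabeledLaw m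
    = (gaussPi 0).withDensity
      fun x => ENNReal.ofReal (Real.exp (-(m ⬝ᵥ m) / 2) * Real.cosh (m ⬝ᵥ x)) := by
  rw [unlabeledLaw, show (fun j => -m j) = -m from rfl, gaussPi_eq_withDensity m,
    gaussPi_eq_withDensity (-m), ← smul_add, ← withDensity_add_left (by fun_prop),
    ← withDensity_smul _ (by fun_prop)]
  congr 1 with x
  rw [Pi.smul_apply, Pi.add_apply, smul_eq_mul,
    two_inv_mul_ofReal_add_ofReal (Real.exp_pos _).le (Real.exp_pos _).le, neg_dotProduct,
    neg_dotProduct_neg, Real.cosh_eq, sub_eq_add_neg, sub_eq_add_neg, Real.exp_add, Real.exp_add,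
    neg_div]
  ring_nf

lemma unlabeledLaw_add_eq_withDensity {c e : Fin p → ℝ} (hce : c ⬝ᵥ e = 0) : unlabeledLaw (c + e)
    = (unlabeledLaw c).withDensity fun x => ENNReal.ofReal (Real.exp (-(e ⬝ᵥ e) / 2)
        * (Real.cosh (e ⬝ᵥ x) + Real.tanh (c ⬝ᵥ x) * Real.sinh (e ⬝ᵥ x))) := by
  rw [unlabeledLaw_eq_withDensity (c + e), unlabeledLaw_eq_withDensity c,
    ← withDensity_mul _ (by fun_prop) (by fun_prop)]
  congr 1 with x
  have := Real.cosh_pos (c ⬝ᵥ x)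
  have hsq : (c + e) ⬝ᵥ (c + e) = c ⬝ᵥ c + e ⬝ᵥ e := by
    simp only [add_dotProduct, dotProduct_add, dotProduct_comm e c, hce, add_zero, zero_add]
  rw [Pi.mul_apply, ← ENNReal.ofReal_mul (by positivity), Real.tanh_eq_sinh_div_cosh, hsq,
    add_dotProduct c e x, Real.cosh_add, neg_add, add_div, Real.exp_add]
  congr 1
  field_simp

lemma hasDensityMomentLE_unlabeledLaw {s : ℝ} (hs₀ : 0 ≤ s) (hs₁ : s ≤ 1) {c e : Fin p → ℝ}
    (hce : c ⬝ᵥ e = 0) :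
    HasDensityMomentLE s (unlabeledLaw (c + e)) (unlabeledLaw c)
      (ENNReal.ofReal (Real.exp (s * (e ⬝ᵥ e) / 2
        * ((1 + s) * min 1 (c ⬝ᵥ c + e ⬝ᵥ e))))) := by
  refine ⟨_, by fun_prop, unlabeledLaw_add_eq_withDensity hce, ?_⟩
  have hcoe : ∀ m : Fin p → ℝ, ((m ⬝ᵥ m).toNNReal : ℝ) = m ⬝ᵥ m := fun m =>
    Real.coe_toNNReal _ (by simpa using dotProduct_star_self_nonneg m)
  have hlaw := map_dotProduct_prodMk_gaussPi 0 hce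
  rw [dotProduct_zero, dotProduct_zero] at hlaw
  have hmoment := lintegral_cosh_mul_likelihoodRatio_rpow_le (c ⬝ᵥ c).toNNReal
    (e ⬝ᵥ e).toNNReal hs₀ hs₁
  simp only [hcoe] at hmoment
  let F : ℝ × ℝ → ℝ≥0∞ := fun y => ENNReal.ofReal (Real.exp (-(c ⬝ᵥ c) / 2) * Real.cosh y.1)
    * ENNReal.ofReal (Real.exp (-(e ⬝ᵥ e) / 2)
      * (Real.cosh y.2 + Real.tanh y.1 * Real.sinh y.2)) ^ (1 + s)
  have hF : Measurable F := by fun_prop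
  rw [unlabeledLaw_eq_withDensity, lintegral_withDensity_eq_lintegral_mul _ (by fun_prop)
    (by fun_prop)]
  calc ∫⁻ x, F (c ⬝ᵥ x, e ⬝ᵥ x) ∂gaussPi 0
      = ∫⁻ y, ∫⁻ z, F (y, z) ∂gaussianReal 0 (e ⬝ᵥ e).toNNReal
          ∂gaussianReal 0 (c ⬝ᵥ c).toNNReal := by
        rw [← lintegral_map hF (g := fun x => (c ⬝ᵥ x, e ⬝ᵥ x)) (by fun_prop), hlaw,
          lintegral_prod _ hF.aemeasurable]
    _ ≤ _ := by
        refine le_trans (lintegral_mono fun y => ?_) hmoment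
        rw [← lintegral_const_mul' _ _ ENNReal.ofReal_ne_top]

end MixtureLaws

section SupportRecovery

open scoped Matrix

variable {p : ℕ}

/-- The joint law of `L` labeled and `n` unlabeled independent samples with mean vector `m`. -/
def sampleLaw (L n : ℕ) (m : Fin p → ℝ) :
    Measure ((Fin L → (Fin p → ℝ) × ℝ) × (Fin n → Fin p → ℝ)) :=
  (Measure.pi fun _ => labeledLaw m).prod (Measure.pi fun _ => unlabeledLaw m)

instance (L n : ℕ) (m : Fin p → ℝ) : IsProbabilityMeasure (sampleLaw L n m) := by
  unfold sampleLaw; infer_instance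

lemma hasDensityMomentLE_sampleLaw (L n : ℕ) {s : ℝ} (hs₀ : 0 ≤ s) (hs₁ : s ≤ 1)
    {c e : Fin p → ℝ} (hce : c ⬝ᵥ e = 0) :
    HasDensityMomentLE s (sampleLaw L n (c + e)) (sampleLaw L n c) (ENNReal.ofReal (Real.exp
      (s * (1 + s) / 2 * ((e ⬝ᵥ e) * (L + n * min 1 (c ⬝ᵥ c + e ⬝ᵥ e)))))) := by
  have hs : 0 ≤ 1 + s := by linarith
  have hlabeled := HasDensityMomentLE.pi hs fun _ : Fin L => hasDensityMomentLE_labeledLaw s hce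
  have hunlabeled := HasDensityMomentLE.pi hs fun _ : Fin n =>
    hasDensityMomentLE_unlabeledLaw hs₀ hs₁ hce
  have hexp : s * (1 + s) / 2 * ((e ⬝ᵥ e) * (L + n * min 1 (c ⬝ᵥ c + e ⬝ᵥ e)))
      = L * (s * (1 + s) * (e ⬝ᵥ e) / 2)
        + n * (s * (e ⬝ᵥ e) / 2 * ((1 + s) * min 1 (c ⬝ᵥ c + e ⬝ᵥ e))) := by
    ring
  rw [hexp, Real.exp_add, Real.exp_nat_mul, Real.exp_nat_mul, ENNReal.ofReal_mul (by positivity),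
    ENNReal.ofReal_pow (Real.exp_pos _).le, ENNReal.ofReal_pow (Real.exp_pos _).le]
  rw [Finset.prod_const, Finset.card_fin] at hlabeled hunlabeled
  have : SFinite (Measure.pi fun _ : Fin L => labeledLaw c) := instSFiniteOfSigmaFinite
  exact hlabeled.prod hs hunlabeled

lemma muVec_insert (k : ℕ) (lam : ℝ) {S : Finset (Fin p)} {j : Fin p} (hj : j ∉ S) :
    muVec p k lam (insert j S) = muVec p k lam S + Pi.single j (Real.sqrt (lam / k)) := by
  ext i
  rcases eq_or_ne i j with rfl | hij
  · simp [muVec, hj]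
  · simp [muVec, hij]

lemma muVec_dotProduct_single (k : ℕ) (lam a : ℝ) {S : Finset (Fin p)} {j : Fin p} (hj : j ∉ S) :
    muVec p k lam S ⬝ᵥ Pi.single j a = 0 := by
  simp [muVec, hj]

lemma muVec_dotProduct_self (k : ℕ) {lam : ℝ} (hlam : 0 ≤ lam) (S : Finset (Fin p)) :
    muVec p k lam S ⬝ᵥ muVec p k lam S = S.card * (lam / k) := by
  have hsq := Real.mul_self_sqrt (div_nonneg hlam (Nat.cast_nonneg k))
  simp only [muVec, dotProduct, ite_mul, zero_mul, mul_ite, mul_zero, Finset.sum_ite_mem,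
    Finset.univ_inter, Finset.inter_self, Finset.sum_const, nsmul_eq_mul, hsq]

lemma hasDensityMomentLE_sampleLaw_muVec_insert (L n : ℕ) {s lam : ℝ} (hs₀ : 0 ≤ s) (hs₁ : s ≤ 1)
    (hlam : 0 ≤ lam) {S : Finset (Fin p)} {j : Fin p} (hj : j ∉ S) :
    HasDensityMomentLE s (sampleLaw L n (muVec p (S.card + 1) lam (insert j S)))
      (sampleLaw L n (muVec p (S.card + 1) lam S)) (ENNReal.ofReal (Real.exp
        (s * (1 + s) / 2 * (lam / (S.card + 1 : ℕ) * (L + n * min 1 lam))))) := by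
  rw [muVec_insert _ _ hj]
  have h := hasDensityMomentLE_sampleLaw L n hs₀ hs₁
    (muVec_dotProduct_single (S.card + 1) lam (Real.sqrt (lam / (S.card + 1 : ℕ))) hj)
  have hsum : S.card * (lam / (S.card + 1 : ℕ)) + lam / (S.card + 1 : ℕ) = lam := by
    rw [← add_one_mul, Nat.cast_add_one, mul_div_cancel₀ _ (by positivity)]
  rwa [muVec_dotProduct_self _ hlam, single_dotProduct, Pi.single_eq_same,
    Real.mul_self_sqrt (div_nonneg hlam (Nat.cast_nonneg _)), hsum] at h

lemma rpow_div_add_rpow_mul_exp_le {δ M x : ℝ} (hδ : 0 ≤ δ) (hM : 1 ≤ M)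
    (hx : x ≤ 2 * (1 - δ) * Real.log M) :
    M ^ (1 - δ ^ 2 / 4) / M + (M ^ (1 - δ ^ 2 / 4)) ^ (-(δ / 2))
        * Real.exp (δ / 2 * (1 + δ / 2) / 2 * x) ≤ 2 * M ^ (-(δ ^ 2 / 4)) := by
  have hM₀ : 0 < M := by linarith
  have hexp : Real.exp (δ / 2 * (1 + δ / 2) / 2 * x) ≤ M ^ (δ / 2 * (1 + δ / 2) * (1 - δ)) := by
    rw [Real.rpow_def_of_pos hM₀, Real.exp_le_exp]
    calc _ ≤ δ / 2 * (1 + δ / 2) / 2 * (2 * (1 - δ) * Real.log M) := by gcongr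
      _ = _ := by ring
  have hfst : M ^ (1 - δ ^ 2 / 4) / M = M ^ (-(δ ^ 2 / 4)) := by
    rw [← Real.rpow_sub_one hM₀.ne']; ring_nf
  have hsnd : (M ^ (1 - δ ^ 2 / 4)) ^ (-(δ / 2)) * Real.exp (δ / 2 * (1 + δ / 2) / 2 * x)
      ≤ M ^ (-(δ ^ 2 / 4)) := by
    calc _ ≤ (M ^ (1 - δ ^ 2 / 4)) ^ (-(δ / 2)) * M ^ (δ / 2 * (1 + δ / 2) * (1 - δ)) := by gcongr
      _ = M ^ (-(δ ^ 2 / 4) - δ ^ 3 / 8) := by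
        rw [← Real.rpow_mul hM₀.le, ← Real.rpow_add hM₀]; ring_nf
      _ ≤ M ^ (-(δ ^ 2 / 4)) := by
        exact Real.rpow_le_rpow_of_exponent_le hM (by linarith [pow_nonneg hδ 3])
  linarith

lemma card_image_insert_compl {α : Type*} [Fintype α] [DecidableEq α] (S : Finset α) :
    (Sᶜ.image fun j => insert j S).card = Fintype.card α - S.card := by
  rw [Finset.card_image_of_injOn fun i hi _ _ h => (Finset.insert_inj (Finset.mem_compl.1 hi)).1 h,
    Finset.card_compl]

theorem exists_sampleLaw_error_ge {k : ℕ} (hk : 1 ≤ k) (hkp : k ≤ p) {δ lam : ℝ} (hδ₀ : 0 ≤ δ)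
    (hδ₁ : δ ≤ 1) (hlam : 0 ≤ lam) {L n : ℕ}
    (hbudget : lam * (L + n * min 1 lam) ≤ 2 * (1 - δ) * k * Real.log (p - k + 1))
    (est : (Fin L → (Fin p → ℝ) × ℝ) × (Fin n → Fin p → ℝ) → Finset (Fin p)) :
    ∃ S ∈ Finset.univ.powersetCard k, 1 - 2 * ((p : ℝ) - k + 1) ^ (-(δ ^ 2 / 4))
      ≤ (sampleLaw L n (muVec p k lam S)).real {d | est d ≠ S} := by
  obtain ⟨S₀, -, hS₀⟩ := Finset.exists_subset_card_eq
    (show k - 1 ≤ (Finset.univ : Finset (Fin p)).card by rw [Finset.card_fin]; omega)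
  obtain rfl : k = S₀.card + 1 := by omega
  set k := S₀.card + 1
  let T := S₀ᶜ.image fun j => insert j S₀
  have hT : (T.card : ℝ) = p - k + 1 := by
    rw [card_image_insert_compl, Fintype.card_fin, Nat.cast_sub (by omega), Nat.cast_add_one]
    ring
  have hM : (1 : ℝ) ≤ p - k + 1 := by
    have : (k : ℝ) ≤ p := by exact_mod_cast hkp
    linarith
  have hTpos : T.Nonempty := Finset.card_pos.1 (by exact_mod_cast hT ▸ zero_lt_one.trans_le hM)
  have hmoment : ∀ S ∈ T, HasDensityMomentLE (δ / 2) (sampleLaw L n (muVec p k lam S))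
      (sampleLaw L n (muVec p k lam S₀)) (ENNReal.ofReal (Real.exp
        (δ / 2 * (1 + δ / 2) / 2 * (lam / k * (L + n * min 1 lam))))) := by
    simp only [T, Finset.forall_mem_image, Finset.mem_compl]
    exact fun j hj => hasDensityMomentLE_sampleLaw_muVec_insert L n (by linarith) (by linarith)
      hlam hj
  obtain ⟨S, hS, herr⟩ := HasDensityMomentLE.exists_error_ge (by linarith) hTpos
    (Real.exp_pos _).le hmoment
    (Real.rpow_pos_of_pos (zero_lt_one.trans_le hM) (1 - δ ^ 2 / 4)) est
  refine ⟨S, ?_, le_trans ?_ herr⟩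
  · obtain ⟨j, hj, rfl⟩ := Finset.mem_image.1 hS
    exact Finset.mem_powersetCard_univ.2
      (Finset.card_insert_of_notMem (Finset.mem_compl.1 hj))
  · rw [hT]
    refine sub_le_sub_left (rpow_div_add_rpow_mul_exp_le hδ₀ hM ?_) 1
    rw [div_mul_eq_mul_div, div_le_iff₀ (Nat.cast_pos.2 hk)]
    linarith

end SupportRecovery

lemma tendsto_sub_atTop_of_tendsto_div {ι : Type*} {l : Filter ι} {u v : ι → ℝ}
    (hv : Tendsto v l atTop) (huv : Tendsto (fun t => u t / v t) l (nhds 0)) :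
    Tendsto (fun t => v t - u t) l atTop := by
  have hlim : Tendsto (fun t => 1 - u t / v t) l (nhds 1) := by simpa using huv.const_sub 1
  refine (hv.atTop_mul_pos one_pos hlim).congr' ?_
  filter_upwards [hv.eventually_gt_atTop 0] with t ht
  field_simp

lemma mul_floor_add_floor_mul_min_le {lam q a b x y : ℝ} (hlam : 0 < lam)
    (hq : q ∈ Set.Icc (0 : ℝ) 1) (ha₀ : 0 ≤ a) (hb₀ : 0 ≤ b) (ha : a ≤ x / lam * y)
    (hb : b ≤ x / lam ^ 2 * y * max 1 lam) :
    lam * (⌊q * a⌋₊ + ⌊(1 - q) * b⌋₊ * min 1 lam) ≤ x * y := by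
  have hq' : 0 ≤ 1 - q := sub_nonneg.2 hq.2
  have hfst : lam * a ≤ x * y := by
    calc lam * a ≤ lam * (x / lam * y) := by gcongr
      _ = x * y := by field_simp
  have hsnd : lam * min 1 lam * b ≤ x * y := by
    calc lam * min 1 lam * b ≤ lam * min 1 lam * (x / lam ^ 2 * y * max 1 lam) := by gcongr
      _ = lam * (max 1 lam * min 1 lam) * (x / lam ^ 2 * y) := by ring
      _ = x * y := by rw [max_mul_min]; field_simp
  calc lam * (⌊q * a⌋₊ + ⌊(1 - q) * b⌋₊ * min 1 lam)
      ≤ lam * (q * a + (1 - q) * b * min 1 lam) := by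
        gcongr
        · exact Nat.floor_le (mul_nonneg hq.1 ha₀)
        · exact Nat.floor_le (mul_nonneg hq' hb₀)
    _ = q * (lam * a) + (1 - q) * (lam * min 1 lam * b) := by ring
    _ ≤ q * (x * y) + (1 - q) * (x * y) := by
        have := hq.1
        gcongr
    _ = x * y := by ring

theorem stmt3_general {ι : Type*} {l : Filter ι} {δ : ℝ} (hδ₀ : 0 < δ) (hδ₁ : δ ≤ 1)
    {lam : ι → ℝ} {p k L n : ι → ℕ} (hlam : ∀ᶠ t in l, 0 ≤ lam t) (hk : ∀ᶠ t in l, 1 ≤ k t)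
    (hpk : Tendsto (fun t => (p t : ℝ) - k t) l atTop)
    (hbudget : ∀ᶠ t in l, lam t * (L t + n t * min 1 (lam t))
      ≤ 2 * (1 - δ) * k t * Real.log (p t - k t + 1))
    (est : ∀ t, (Fin (L t) → (Fin (p t) → ℝ) × ℝ) → (Fin (n t) → Fin (p t) → ℝ) →
      Finset (Fin (p t))) :
    Tendsto (fun t => ⨆ S ∈ Finset.univ.powersetCard (k t),
      (((Measure.pi fun _ : Fin (L t) => labeledLaw (muVec (p t) (k t) (lam t) S)).prod
          (Measure.pi fun _ : Fin (n t) => unlabeledLaw (muVec (p t) (k t) (lam t) S)))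
        {d | est t d.1 d.2 ≠ S}).toReal) l (nhds 1) := by
  have hlower : Tendsto (fun t => 1 - 2 * ((p t : ℝ) - k t + 1) ^ (-(δ ^ 2 / 4))) l (nhds 1) := by
    simpa using ((tendsto_rpow_neg_atTop (by positivity : 0 < δ ^ 2 / 4)).comp
      (tendsto_atTop_add_const_right _ 1 hpk)).const_mul 2 |>.const_sub 1
  refine tendsto_of_tendsto_of_tendsto_of_le_of_le' hlower tendsto_const_nhds ?_ ?_
  · filter_upwards [hlam, hk, hpk.eventually_ge_atTop 0, hbudget] with t hlam hk hpk hbudget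
    have hkp : k t ≤ p t := by exact_mod_cast sub_nonneg.1 hpk
    obtain ⟨S, hS, herr⟩ := exists_sampleLaw_error_ge hk hkp hδ₀.le hδ₁ hlam hbudget
      fun d => est t d.1 d.2
    refine le_ciSup_of_le (Set.finite_range _).bddAbove S ?_
    rw [ciSup_pos hS]
    exact herr
  · exact .of_forall fun t =>
      Real.iSup_le (fun S => Real.iSup_le (fun _ => measureReal_le_one) zero_le_one) zero_le_one

/-- Corollary 1: SSL information lower bound. With
`L₀ < 2(1-δ)(k/λ) log(p-k+1)`, `n₀ < 2(1-δ)(k/λ²) log(p-k+1) max{1,λ}`, `L = ⌊qL₀⌋` labeled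
and `n = ⌊(1-q)n₀⌋` unlabeled samples, any sequence of support estimators based on both data
sets has worst-case error probability at least `δ` asymptotically as `p → ∞`. -/
theorem stmt3 (δ lam q : ℝ) (hδ : δ ∈ Set.Ioo (0 : ℝ) 1) (hlam : 0 < lam)
    (hq : q ∈ Set.Icc (0 : ℝ) 1)
    (p k L₀ n₀ : ℕ → ℕ)
    (hp : Tendsto p atTop atTop) (hk : Tendsto k atTop atTop)
    (hL₀ : Tendsto L₀ atTop atTop) (hn₀ : Tendsto n₀ atTop atTop)
    (hkp : Tendsto (fun t => (k t : ℝ) / (p t : ℝ)) atTop (nhds 0))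
    (hL₀bound : ∀ t, (L₀ t : ℝ) <
      2 * (1 - δ) * (k t : ℝ) / lam * Real.log ((p t : ℝ) - (k t : ℝ) + 1))
    (hn₀bound : ∀ t, (n₀ t : ℝ) <
      2 * (1 - δ) * (k t : ℝ) / lam ^ 2 * Real.log ((p t : ℝ) - (k t : ℝ) + 1) * max 1 lam)
    (est : ∀ t : ℕ,
      (Fin ⌊q * (L₀ t : ℝ)⌋₊ → (Fin (p t) → ℝ) × ℝ) →
      (Fin ⌊(1 - q) * (n₀ t : ℝ)⌋₊ → (Fin (p t) → ℝ)) → Finset (Fin (p t))) :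
    δ ≤ liminf (fun t : ℕ =>
      ⨆ S ∈ Finset.univ.powersetCard (k t),
        (((Measure.pi fun _ : Fin ⌊q * (L₀ t : ℝ)⌋₊ => labeledLaw (muVec (p t) (k t) lam S)).prod
            (Measure.pi fun _ : Fin ⌊(1 - q) * (n₀ t : ℝ)⌋₊ =>
              unlabeledLaw (muVec (p t) (k t) lam S)))
          {d | est t d.1 d.2 ≠ S}).toReal) atTop := by
  have hpk : Tendsto (fun t => (p t : ℝ) - k t) atTop atTop :=
    tendsto_sub_atTop_of_tendsto_div (tendsto_natCast_atTop_atTop.comp hp) hkp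
  have hbudget : ∀ t, lam * (⌊q * (L₀ t : ℝ)⌋₊ + ⌊(1 - q) * (n₀ t : ℝ)⌋₊ * min 1 lam)
      ≤ 2 * (1 - δ) * k t * Real.log (p t - k t + 1) := fun t =>
    mul_floor_add_floor_mul_min_le hlam hq (Nat.cast_nonneg _) (Nat.cast_nonneg _)
      (hL₀bound t).le (hn₀bound t).le
  have hlim := stmt3_general hδ.1 hδ.2.le (.of_forall fun _ => hlam.le) (hk.eventually_ge_atTop 1)
    hpk (.of_forall hbudget) est
  exact hδ.2.le.trans_eq hlim.liminf_eq.symm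
end
end

section
/- Let k = ⌊c₁ p^α⌋, L = ⌊(2βk/λ)·log(p−k)⌋, n = ⌊c₂ k^γ/λ²⌋ and D = (log p)², for some β, γ, λ, c₁, c₂ > 0 and α ∈ (0, 1/2). If β < 1/2 − α and γ < 2, then as p → ∞ the squared low-degree norm satisfies ‖L_{L+n}^{≤D}‖² = O(1). -/
open MeasureTheory ProbabilityTheory Filter
open scoped ENNReal NNReal

noncomputable section

/-- The null distribution `Q_{L+n}`: all `L+n` samples are `N(0, I_p)`. -/
def nullLaw (p m : ℕ) : Measure (Fin m → Fin p → ℝ) :=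
  Measure.pi fun _ : Fin m => gaussPi (fun _ : Fin p => 0)

/-- The alternative distribution `P_{L+n}`: `S` uniform over all `k`-element subsets of `[p]`;
the first `L` samples are `μ^S + ξ_i` (labeled, label 1) and the remaining `n` samples are
`y_i μ^S + ξ_i` with unobserved Rademacher labels `y_i`. -/
def altLaw (p k L n : ℕ) (lam : ℝ) : Measure (Fin (L + n) → Fin p → ℝ) :=
  ((((Finset.univ : Finset (Fin p)).powersetCard k).card : ℝ≥0∞))⁻¹ •
    ∑ S ∈ (Finset.univ : Finset (Fin p)).powersetCard k,
      Measure.pi fun i : Fin (L + n) =>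
        if (i : ℕ) < L then gaussPi (muVec p k lam S)
        else (2 : ℝ≥0∞)⁻¹ • gaussPi (muVec p k lam S)
          + (2 : ℝ≥0∞)⁻¹ • gaussPi (fun j => -muVec p k lam S j)

/-!
The mean of the Hermite polynomial `Heₙ` under `N(θ, 1)` is `θ ^ n`. Expanding test polynomials in
the Hermite basis, the squared low-degree norm of a mixture of Gaussians `N(θ, I)` is therefore
`𝔼 ∑ d ≤ D, ⟨θ, θ'⟩ ^ d / d!` over independent copies `θ`, `θ'` of the mean. Condition on the
supports and let `x = λ |S ∩ S'| / k`. The moments of `⟨θ, θ'⟩` over the labels are nonnegative,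
so for every `0 < r ≤ 1` the truncated exponential series is at most
`r ^ (-D) 𝔼 exp (r ⟨θ, θ'⟩) = r ^ (-D) exp (r x) ^ L cosh (r x) ^ n`.
Taking `r = 1` when `|S ∩ S'| ≤ (log p) ^ 3` and `r = 1 / k` otherwise bounds this by
`e q ^ |S ∩ S'|` with `q = e p ^ (2 β)`, and `𝔼 q ^ |S ∩ S'| ≤ exp (q k ^ 2 / p)` is bounded
because `2 α + 2 β < 1`.
-/

open scoped BigOperators Polynomial
open Polynomial (hermite derivative)

/-! ### Hermite polynomials under Gaussian measures -/

lemma derivative_hermite_succ (n : ℕ) :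
    derivative (hermite (n + 1)) = (n + 1 : ℤ[X]) * hermite n := by
  induction n with
  | zero => simp
  | succ n ih =>
    rw [Polynomial.hermite_succ (n + 1), ih, Polynomial.hermite_succ n]
    have hn : derivative (n + 1 : ℤ[X]) = 0 := by simp
    rw [Polynomial.hermite_succ] at ih
    simp only [Polynomial.derivative_sub, Polynomial.derivative_mul, Polynomial.derivative_X,
      hn] at ih ⊢
    push_cast
    linear_combination Polynomial.X * ih

/-- The probabilists' Hermite polynomial `Heₙ` with real coefficients: the orthogonal polynomials of
`N(0, 1)`. -/
def realHermite (n : ℕ) : ℝ[X] := (hermite n).map (Int.castRingHom ℝ)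

lemma realHermite_zero : realHermite 0 = 1 := by
  simp [realHermite]

lemma realHermite_succ (n : ℕ) :
    realHermite (n + 1) = Polynomial.X * realHermite n - derivative (realHermite n) := by
  simp [realHermite, Polynomial.hermite_succ, Polynomial.derivative_map]

lemma derivative_realHermite_succ (n : ℕ) :
    derivative (realHermite (n + 1)) = (n + 1 : ℝ[X]) * realHermite n := by
  rw [realHermite, Polynomial.derivative_map, derivative_hermite_succ]
  simp [realHermite]

lemma X_mul_realHermite (n : ℕ) :
    Polynomial.X * realHermite n = realHermite (n + 1) + (n : ℝ[X]) * realHermite (n - 1) := by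
  cases n with
  | zero => simp [realHermite_succ, realHermite_zero]
  | succ n =>
    rw [realHermite_succ (n + 1), derivative_realHermite_succ, Nat.add_sub_cancel]
    push_cast
    ring

lemma integrable_eval_gaussianReal (m : ℝ) (v : ℝ≥0) (q : ℝ[X]) :
    Integrable (fun x => q.eval x) (gaussianReal m v) := by
  simp only [Polynomial.eval_eq_sum, Polynomial.sum_def]
  refine integrable_finsetSum _ fun n _ => Integrable.const_mul ?_ _
  have hn : MemLp id n (gaussianReal m v) := memLp_id_gaussianReal' n (by simp)
  refine (integrable_norm_iff (by fun_prop)).1 ?_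
  simpa [norm_pow] using hn.integrable_norm_pow'

lemma hasDerivAt_gaussianPDFReal (m : ℝ) (v : ℝ≥0) (x : ℝ) :
    HasDerivAt (gaussianPDFReal m v) (-(x - m) / v * gaussianPDFReal m v x) x := by
  have hexp : HasDerivAt (fun y : ℝ => -(y - m) ^ 2 / (2 * v)) (-(x - m) / v) x := by
    refine ((((hasDerivAt_id x).sub_const m).fun_pow 2).fun_neg.div_const _).congr_deriv ?_
    simp only [id_eq]
    field_simp
    ring
  rw [gaussianPDFReal_def]
  exact (hexp.exp.const_mul _).congr_deriv (by ring)

lemma integrable_eval_mul_gaussianPDFReal (m : ℝ) {v : ℝ≥0} (hv : v ≠ 0) (q : ℝ[X]) :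
    Integrable (fun x => q.eval x * gaussianPDFReal m v x) := by
  have h := integrable_eval_gaussianReal m v q
  rw [gaussianReal_of_var_ne_zero _ hv, integrable_withDensity_iff_integrable_smul'
    (measurable_gaussianPDF m v) (ae_of_all _ fun _ => gaussianPDF_lt_top)] at h
  simpa only [toReal_gaussianPDF, smul_eq_mul, mul_comm] using h

lemma integral_sub_mul_eval_gaussianReal (m : ℝ) (v : ℝ≥0) (q : ℝ[X]) :
    ∫ x, (x - m) * q.eval x ∂gaussianReal m v =
      v * ∫ x, (derivative q).eval x ∂gaussianReal m v := by
  rcases eq_or_ne v 0 with rfl | hv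
  · simp
  have hv' : (v : ℝ) ≠ 0 := by exact_mod_cast hv
  have hparts := integral_mul_deriv_eq_deriv_mul_of_integrable
    (fun x _ => q.hasDerivAt x) (fun x _ => hasDerivAt_gaussianPDFReal m v x)
    ((integrable_eval_mul_gaussianPDFReal m hv
      (q * (Polynomial.X - Polynomial.C m) * Polynomial.C (-(v : ℝ)⁻¹))).congr
        (ae_of_all _ fun x => by simp; ring))
    (integrable_eval_mul_gaussianPDFReal m hv _) (integrable_eval_mul_gaussianPDFReal m hv q)
  simp only [integral_gaussianReal_eq_integral_smul hv, smul_eq_mul]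
  calc ∫ x, gaussianPDFReal m v x * ((x - m) * q.eval x)
      = -v * ∫ x, q.eval x * (-(x - m) / v * gaussianPDFReal m v x) := by
        rw [← integral_const_mul]
        congr 1 with x
        field_simp
    _ = v * ∫ x, gaussianPDFReal m v x * (derivative q).eval x := by
        rw [hparts, mul_neg, neg_mul, neg_neg]
        simp only [mul_comm]

lemma integral_realHermite_succ_mul (m : ℝ) (n : ℕ) (q : ℝ[X]) :
    ∫ x, (realHermite (n + 1)).eval x * q.eval x ∂gaussianReal m 1 =
      m * ∫ x, (realHermite n).eval x * q.eval x ∂gaussianReal m 1 +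
        ∫ x, (realHermite n).eval x * (derivative q).eval x ∂gaussianReal m 1 := by
  have hstein := integral_sub_mul_eval_gaussianReal m 1 (realHermite n * q)
  have hint (r : ℝ[X]) := integrable_eval_gaussianReal m 1 r
  have h1 := hint (Polynomial.X * (realHermite n * q))
  have h2 := hint (Polynomial.C m * (realHermite n * q))
  have h3 := hint (derivative (realHermite n) * q)
  have h4 := hint (realHermite n * derivative q)
  simp only [Polynomial.eval_mul, Polynomial.eval_X, Polynomial.eval_C] at h1 h2 h3 h4
  simp only [realHermite_succ, Polynomial.derivative_mul, Polynomial.eval_sub, Polynomial.eval_add,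
    Polynomial.eval_mul, Polynomial.eval_X, sub_mul, mul_assoc] at hstein ⊢
  rw [integral_sub h1 h2, integral_add h3 h4, NNReal.coe_one, one_mul, integral_const_mul]
    at hstein
  rw [integral_sub h1 h3]
  linarith

lemma integral_realHermite (m : ℝ) (n : ℕ) :
    ∫ x, (realHermite n).eval x ∂gaussianReal m 1 = m ^ n := by
  induction n with
  | zero => simp [realHermite_zero]
  | succ n ih => simpa [ih, pow_succ'] using integral_realHermite_succ_mul m n 1

lemma integral_realHermite_mul_realHermite (a b : ℕ) :
    ∫ x, (realHermite a).eval x * (realHermite b).eval x ∂gaussianReal 0 1 =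
      if a = b then (a.factorial : ℝ) else 0 := by
  induction a generalizing b with
  | zero =>
    cases b with
    | zero => simp [realHermite_zero]
    | succ b => simpa [realHermite_zero] using integral_realHermite 0 (b + 1)
  | succ a ih =>
    rw [integral_realHermite_succ_mul, zero_mul, zero_add]
    cases b with
    | zero => simp [realHermite_zero]
    | succ b =>
      have hb (x : ℝ) : (derivative (realHermite (b + 1))).eval x =
          (b + 1) * (realHermite b).eval x := by
        simp [derivative_realHermite_succ]
      simp only [hb, mul_left_comm _ ((b : ℝ) + 1), integral_const_mul, ih, Nat.add_left_inj,
        mul_ite, mul_zero]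
      split_ifs with h
      · rw [h, Nat.factorial_succ]
        push_cast
        rfl
      · rfl

section MvHermite

variable {σ : Type*} [Fintype σ]

/-- The multivariate Hermite polynomial `∏ᵥ He_{a v}(X v)` with multi-index `a`: the orthogonal
polynomials of the standard Gaussian measure on `ℝ^σ`. -/
def mvHermite (a : σ → ℕ) : MvPolynomial σ ℝ :=
  ∏ v, Polynomial.aeval (MvPolynomial.X v) (realHermite (a v))

lemma eval_mvHermite (a : σ → ℕ) (x : σ → ℝ) :
    MvPolynomial.eval x (mvHermite a) = ∏ v, (realHermite (a v)).eval (x v) := by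
  simp only [mvHermite, map_prod]
  refine Finset.prod_congr rfl fun v _ => ?_
  have := Polynomial.aeval_algHom_apply (MvPolynomial.aeval x : MvPolynomial σ ℝ →ₐ[ℝ] ℝ)
    (MvPolynomial.X v) (realHermite (a v))
  simpa [MvPolynomial.aeval_eq_eval] using this.symm

/-- The Gaussian measure `N(θ, I)` on `ℝ^σ`. -/
def piGaussian (θ : σ → ℝ) : Measure (σ → ℝ) :=
  Measure.pi fun v => gaussianReal (θ v) 1

lemma integrable_eval_piGaussian (θ : σ → ℝ) (f : MvPolynomial σ ℝ) :
    Integrable (fun x => MvPolynomial.eval x f) (piGaussian θ) := by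
  simp only [MvPolynomial.eval_eq']
  refine integrable_finsetSum _ fun s _ => Integrable.const_mul ?_ _
  refine Integrable.fintype_prod (f := fun v y => y ^ s v) fun v => ?_
  simpa only [Polynomial.eval_pow, Polynomial.eval_X] using
    integrable_eval_gaussianReal (θ v) 1 (Polynomial.X ^ s v)

lemma integral_mvHermite (θ : σ → ℝ) (a : σ → ℕ) :
    ∫ x, MvPolynomial.eval x (mvHermite a) ∂piGaussian θ = ∏ v, θ v ^ a v := by
  simp only [eval_mvHermite]
  exact (integral_fintype_prod_eq_prod fun v x => (realHermite (a v)).eval x).trans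
    (Finset.prod_congr rfl fun v _ => integral_realHermite (θ v) (a v))

lemma integral_mvHermite_mul_mvHermite (a b : σ → ℕ) :
    ∫ x, MvPolynomial.eval x (mvHermite a) * MvPolynomial.eval x (mvHermite b) ∂piGaussian 0 =
      if a = b then ∏ v, ((a v).factorial : ℝ) else 0 := by
  simp only [eval_mvHermite, ← Finset.prod_mul_distrib, funext_iff (f := a)]
  rw [← Fintype.prod_ite_zero]
  exact (integral_fintype_prod_eq_prod fun v x =>
    (realHermite (a v)).eval x * (realHermite (b v)).eval x).trans
      (Finset.prod_congr rfl fun v _ => integral_realHermite_mul_realHermite (a v) (b v))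

lemma integral_sum_mvHermite (θ : σ → ℝ) (s : Finset (σ → ℕ)) (c : (σ → ℕ) → ℝ) :
    ∫ x, MvPolynomial.eval x (∑ a ∈ s, c a • mvHermite a) ∂piGaussian θ =
      ∑ a ∈ s, c a * ∏ v, θ v ^ a v := by
  simp only [map_sum, MvPolynomial.smul_eval]
  rw [integral_finsetSum _ fun a _ => (integrable_eval_piGaussian θ _).const_mul _]
  simp only [integral_const_mul, integral_mvHermite]

lemma integral_sum_mvHermite_sq (s : Finset (σ → ℕ)) (c : (σ → ℕ) → ℝ) :
    ∫ x, MvPolynomial.eval x (∑ a ∈ s, c a • mvHermite a) ^ 2 ∂piGaussian 0 =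
      ∑ a ∈ s, c a ^ 2 * ∏ v, ((a v).factorial : ℝ) := by
  have hint (a b : σ → ℕ) : Integrable (fun x =>
      c a * c b * (MvPolynomial.eval x (mvHermite a) * MvPolynomial.eval x (mvHermite b)))
      (piGaussian 0) := by
    simpa only [map_mul] using
      (integrable_eval_piGaussian 0 (mvHermite a * mvHermite b)).const_mul (c a * c b)
  simp only [map_sum, MvPolynomial.smul_eval, sq, Finset.sum_mul_sum, mul_mul_mul_comm]
  rw [integral_finsetSum _ fun a _ => integrable_finsetSum _ fun b _ => hint a b]
  refine Finset.sum_congr rfl fun a ha => ?_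
  rw [integral_finsetSum _ fun b _ => hint a b]
  simp [integral_const_mul, integral_mvHermite_mul_mvHermite, ha]

variable [DecidableEq σ]

/-- The multi-indices of total degree at most `D`, indexing the Hermite basis of the polynomials of
degree at most `D`. -/
def multiIndices (σ : Type*) [Fintype σ] [DecidableEq σ] (D : ℕ) : Finset (σ → ℕ) :=
  (Finset.range (D + 1)).biUnion fun d => Finset.piAntidiag Finset.univ d

lemma mem_multiIndices {D : ℕ} {a : σ → ℕ} : a ∈ multiIndices σ D ↔ ∑ v, a v ≤ D := by
  simp [multiIndices]

lemma sum_multiIndices {M : Type*} [AddCommMonoid M] (D : ℕ) (g : (σ → ℕ) → M) :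
    ∑ a ∈ multiIndices σ D, g a =
      ∑ d ∈ Finset.range (D + 1), ∑ a ∈ Finset.piAntidiag Finset.univ d, g a := by
  refine Finset.sum_biUnion fun d _ e _ hde => Finset.disjoint_left.2 fun a hd he => hde ?_
  rw [← (Finset.mem_piAntidiag.1 hd).1, (Finset.mem_piAntidiag.1 he).1]

/-- The space of polynomials spanned by the Hermite polynomials of degree at most `D`; it turns out
to contain every polynomial of degree at most `D`. -/
def hermiteSpan (σ : Type*) [Fintype σ] [DecidableEq σ] (D : ℕ) : Submodule ℝ (MvPolynomial σ ℝ) :=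
  Submodule.span ℝ (mvHermite '' (multiIndices σ D : Set (σ → ℕ)))

lemma hermiteSpan_mono {D E : ℕ} (h : D ≤ E) : hermiteSpan σ D ≤ hermiteSpan σ E :=
  Submodule.span_mono <| Set.image_mono fun _ ha =>
    mem_multiIndices.2 ((mem_multiIndices.1 ha).trans h)

lemma X_mul_mvHermite (a : σ → ℕ) (v : σ) :
    MvPolynomial.X v * mvHermite a =
      mvHermite (Function.update a v (a v + 1)) +
        (a v : ℝ) • mvHermite (Function.update a v (a v - 1)) := by
  have hupdate (n : ℕ) : mvHermite (Function.update a v n) =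
      Polynomial.aeval (MvPolynomial.X v) (realHermite n) *
        ∏ u ∈ Finset.univ.erase v, Polynomial.aeval (MvPolynomial.X u) (realHermite (a u)) := by
    rw [mvHermite, ← Finset.mul_prod_erase _ _ (Finset.mem_univ v), Function.update_self]
    congr 1
    refine Finset.prod_congr rfl fun u hu => ?_
    rw [Function.update_of_ne (Finset.ne_of_mem_erase hu)]
  have hself := hupdate (a v)
  rw [Function.update_eq_self] at hself
  have hX := congrArg (Polynomial.aeval (MvPolynomial.X v : MvPolynomial σ ℝ))
    (X_mul_realHermite (a v))
  simp only [map_mul, map_add, Polynomial.aeval_X, map_natCast] at hX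
  rw [hself, hupdate, hupdate, ← mul_assoc, hX, add_mul, mul_assoc, MvPolynomial.smul_eq_C_mul,
    map_natCast]

lemma X_mul_mem_hermiteSpan {D : ℕ} {f : MvPolynomial σ ℝ} (hf : f ∈ hermiteSpan σ D) (v : σ) :
    MvPolynomial.X v * f ∈ hermiteSpan σ (D + 1) := by
  induction hf using Submodule.span_induction with
  | zero => simp
  | add f g _ _ hf hg => rw [mul_add]; exact add_mem hf hg
  | smul c f _ hf => rw [mul_smul_comm]; exact Submodule.smul_mem _ c hf
  | mem f hf =>
    obtain ⟨a, ha, rfl⟩ := hf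
    replace ha := mem_multiIndices.1 ha
    have hsum := Finset.add_sum_erase Finset.univ a (Finset.mem_univ v)
    have hmem (n : ℕ) (hn : n ≤ a v + 1) :
        mvHermite (Function.update a v n) ∈ hermiteSpan σ (D + 1) := by
      refine Submodule.subset_span ⟨_, mem_multiIndices.2 ?_, rfl⟩
      rw [Finset.sum_update_of_mem (Finset.mem_univ v), Finset.sdiff_singleton_eq_erase]
      omega
    rw [X_mul_mvHermite]
    exact add_mem (hmem _ le_rfl) (Submodule.smul_mem _ _ (hmem _ (by omega)))

lemma monomial_mem_hermiteSpan (s : σ →₀ ℕ) (c : ℝ) :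
    MvPolynomial.monomial s c ∈ hermiteSpan σ (MvPolynomial.monomial s c).totalDegree := by
  refine MvPolynomial.induction_on_monomial
    (motive := fun f => f ∈ hermiteSpan σ f.totalDegree) (fun c => ?_) (fun f v hf => ?_) s c
  · have hone : (1 : MvPolynomial σ ℝ) ∈ hermiteSpan σ 0 :=
      Submodule.subset_span ⟨0, mem_multiIndices.2 (by simp), by simp [mvHermite, realHermite_zero]⟩
    rw [MvPolynomial.totalDegree_C, ← mul_one (MvPolynomial.C c), ← MvPolynomial.smul_eq_C_mul]
    exact Submodule.smul_mem _ c hone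
  · rcases eq_or_ne f 0 with rfl | hf0
    · simp
    · rw [MvPolynomial.totalDegree_mul_of_isDomain hf0 (MvPolynomial.X_ne_zero v),
        MvPolynomial.totalDegree_X, mul_comm]
      exact X_mul_mem_hermiteSpan hf v

lemma mem_hermiteSpan_of_totalDegree_le {f : MvPolynomial σ ℝ} {D : ℕ} (hf : f.totalDegree ≤ D) :
    f ∈ hermiteSpan σ D := by
  rw [← f.support_sum_monomial_coeff]
  refine sum_mem fun s hs => hermiteSpan_mono ?_ (monomial_mem_hermiteSpan s _)
  exact (MvPolynomial.totalDegree_monomial_le s _).trans ((MvPolynomial.le_totalDegree hs).trans hf)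

end MvHermite

/-! ### Low-degree norms of Gaussian mixtures -/

section LowDegree

variable {σ ι : Type*} [Fintype σ]

lemma expect_expect_dotProduct_pow [DecidableEq σ] (s : Finset ι) (θ : ι → σ → ℝ) (d : ℕ) :
    𝔼 i ∈ s, 𝔼 j ∈ s, (θ i ⬝ᵥ θ j) ^ d =
      ∑ a ∈ Finset.piAntidiag Finset.univ d,
        Nat.multinomial Finset.univ a * (𝔼 i ∈ s, ∏ v, θ i v ^ a v) ^ 2 := by
  simp only [dotProduct, Finset.sum_pow_eq_sum_piAntidiag, Finset.expect_sum_comm, mul_pow,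
    Finset.prod_mul_distrib, ← Finset.mul_expect, ← Finset.expect_mul, sq]

lemma expect_expect_dotProduct_pow_nonneg (s : Finset ι) (θ : ι → σ → ℝ) (d : ℕ) :
    0 ≤ 𝔼 i ∈ s, 𝔼 j ∈ s, (θ i ⬝ᵥ θ j) ^ d := by
  classical
  rw [expect_expect_dotProduct_pow]
  positivity

/-- The squared low-degree norm, at degree `D`, of the uniform mixture of the Gaussian measures
`N(θ i, I)`, `i ∈ s`, relative to `N(0, I)`, given by its Hermite expansion rather than as a
supremum over polynomials. -/
def lowDegreeNormSq (s : Finset ι) (θ : ι → σ → ℝ) (D : ℕ) : ℝ :=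
  𝔼 i ∈ s, 𝔼 j ∈ s, ∑ d ∈ Finset.range (D + 1), (θ i ⬝ᵥ θ j) ^ d / d.factorial

lemma exists_eq_sum_mvHermite [DecidableEq σ] {f : MvPolynomial σ ℝ} {D : ℕ}
    (hf : f.totalDegree ≤ D) :
    ∃ c : (σ → ℕ) → ℝ, f = ∑ a ∈ multiIndices σ D, c a • mvHermite a := by
  obtain ⟨c, hc⟩ := (Submodule.mem_span_image_finset_iff_exists_fun ℝ).1
    (mem_hermiteSpan_of_totalDegree_le hf)
  refine ⟨fun a => if h : a ∈ multiIndices σ D then c ⟨a, h⟩ else 0, ?_⟩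
  rw [← hc, ← Finset.sum_coe_sort (multiIndices σ D)]
  simp

lemma lowDegreeNormSq_eq_sum [DecidableEq σ] (s : Finset ι) (θ : ι → σ → ℝ) (D : ℕ) :
    lowDegreeNormSq s θ D = ∑ a ∈ multiIndices σ D,
      (𝔼 i ∈ s, ∏ v, θ i v ^ a v) ^ 2 / ∏ v, ((a v).factorial : ℝ) := by
  simp only [lowDegreeNormSq, Finset.expect_sum_comm, ← Finset.expect_div,
    expect_expect_dotProduct_pow, sum_multiIndices]
  refine Finset.sum_congr rfl fun d _ => ?_
  rw [Finset.sum_div]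
  refine Finset.sum_congr rfl fun a ha => ?_
  have hspec := Nat.multinomial_spec Finset.univ a
  rw [(Finset.mem_piAntidiag.1 ha).1] at hspec
  rw [← hspec]
  push_cast
  have : (0 : ℝ) < ∏ v, ((a v).factorial : ℝ) := Finset.prod_pos fun v _ => by positivity
  have : (0 : ℝ) < Nat.multinomial Finset.univ a := by exact_mod_cast Nat.multinomial_pos _ _
  field_simp

theorem sq_expect_integral_le_lowDegreeNormSq_mul (s : Finset ι) (θ : ι → σ → ℝ) {D : ℕ}
    {f : MvPolynomial σ ℝ} (hf : f.totalDegree ≤ D) :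
    (𝔼 i ∈ s, ∫ x, MvPolynomial.eval x f ∂piGaussian (θ i)) ^ 2 ≤
      lowDegreeNormSq s θ D * ∫ x, MvPolynomial.eval x f ^ 2 ∂piGaussian 0 := by
  classical
  obtain ⟨c, rfl⟩ := exists_eq_sum_mvHermite hf
  rw [integral_sum_mvHermite_sq, lowDegreeNormSq_eq_sum]
  simp only [integral_sum_mvHermite, Finset.expect_sum_comm, ← Finset.mul_expect]
  refine Finset.sum_sq_le_sum_mul_sum_of_sq_le_mul _ (fun a _ => by positivity)
    (fun a _ => by positivity) fun a _ => le_of_eq ?_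
  have : (0 : ℝ) < ∏ v, ((a v).factorial : ℝ) := Finset.prod_pos fun v _ => by positivity
  field_simp

lemma expect_sum_pow_div_factorial_le {s : Finset ι} {t : ι → ℝ}
    (ht : ∀ d : ℕ, 0 ≤ 𝔼 i ∈ s, t i ^ d) {r : ℝ} (hr0 : 0 < r) (hr1 : r ≤ 1) (D : ℕ) :
    𝔼 i ∈ s, ∑ d ∈ Finset.range (D + 1), t i ^ d / d.factorial ≤
      (r ^ D)⁻¹ * 𝔼 i ∈ s, Real.exp (r * t i) := by
  have hterm (d : ℕ) : 𝔼 i ∈ s, (r * t i) ^ d / d.factorial =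
      r ^ d * ((𝔼 i ∈ s, t i ^ d) / d.factorial) := by
    simp only [mul_pow, mul_div_assoc, Finset.mul_expect, Finset.expect_div]
  have hexp : HasSum (fun d : ℕ => 𝔼 i ∈ s, (r * t i) ^ d / d.factorial)
      (𝔼 i ∈ s, Real.exp (r * t i)) := by
    simp only [Finset.expect_eq_sum_div_card, Real.exp_eq_exp_ℝ]
    exact (hasSum_sum fun i _ => NormedSpace.expSeries_div_hasSum_exp (r * t i)).div_const _
  rw [inv_mul_eq_div, le_div_iff₀' (by positivity)]
  calc r ^ D * 𝔼 i ∈ s, ∑ d ∈ Finset.range (D + 1), t i ^ d / d.factorial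
      = ∑ d ∈ Finset.range (D + 1), r ^ D * ((𝔼 i ∈ s, t i ^ d) / d.factorial) := by
        simp only [Finset.expect_sum_comm, Finset.expect_div, Finset.mul_sum]
    _ ≤ ∑ d ∈ Finset.range (D + 1), 𝔼 i ∈ s, (r * t i) ^ d / d.factorial := by
        refine Finset.sum_le_sum fun d hd => ?_
        rw [hterm]
        exact mul_le_mul_of_nonneg_right
          (pow_le_pow_of_le_one hr0.le hr1 (Finset.mem_range_succ_iff.1 hd))
          (div_nonneg (ht d) (by positivity))
    _ ≤ 𝔼 i ∈ s, Real.exp (r * t i) :=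
        sum_le_hasSum _ (fun d _ => by
          rw [hterm]
          exact mul_nonneg (by positivity) (div_nonneg (ht d) (by positivity))) hexp

end LowDegree

section Mixture

variable {ι Ω : Type*} [MeasurableSpace Ω]

/-- The uniform mixture of the measures `μ i`, `i ∈ s`; it is `0` if `s` is empty. -/
def mixture (s : Finset ι) (μ : ι → Measure Ω) : Measure Ω :=
  (s.card : ℝ≥0∞)⁻¹ • ∑ i ∈ s, μ i

lemma integral_mixture {s : Finset ι} {μ : ι → Measure Ω} {f : Ω → ℝ}
    (hf : ∀ i ∈ s, Integrable f (μ i)) :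
    ∫ x, f x ∂mixture s μ = 𝔼 i ∈ s, ∫ x, f x ∂μ i := by
  rw [mixture, integral_smul_measure, integral_finsetSum_measure hf, Finset.expect_eq_sum_div_card,
    ENNReal.toReal_inv, ENNReal.toReal_natCast, smul_eq_mul, inv_mul_eq_div]

lemma integrable_mixture {s : Finset ι} {μ : ι → Measure Ω} {f : Ω → ℝ}
    (hf : ∀ i ∈ s, Integrable f (μ i)) : Integrable f (mixture s μ) := by
  rcases s.eq_empty_or_nonempty with rfl | hs
  · simp [mixture]
  · exact (integrable_finsetSum_measure.2 hf).smul_measure (by simp [hs.ne_empty])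

lemma isProbabilityMeasure_mixture {s : Finset ι} (hs : s.Nonempty) (μ : ι → Measure Ω)
    [∀ i, IsProbabilityMeasure (μ i)] : IsProbabilityMeasure (mixture s μ) :=
  ⟨by simp [mixture, ENNReal.inv_mul_cancel, hs.ne_empty]⟩

lemma pi_mixture {κ : Type*} [Fintype κ] [DecidableEq κ] {t : κ → Finset ι}
    (ht : ∀ j, (t j).Nonempty) (μ : ι → Measure Ω) [∀ i, IsProbabilityMeasure (μ i)] :
    Measure.pi (fun j => mixture (t j) μ) =
      mixture (Fintype.piFinset t) fun y => Measure.pi fun j => μ (y j) := by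
  have (j : κ) := isProbabilityMeasure_mixture (ht j) μ
  refine Measure.pi_eq fun A _ => ?_
  simp only [mixture, Measure.smul_apply, Measure.finsetSum_apply, smul_eq_mul, Measure.pi_pi,
    Finset.prod_mul_distrib, Finset.prod_univ_sum, Fintype.card_piFinset, Nat.cast_prod]
  rw [ENNReal.prod_inv_distrib]
  intro i _ j _ _
  simp

end Mixture

lemma measurePreserving_uncurry_pi {ι κ Ω : Type*} [Fintype ι] [Fintype κ] [MeasurableSpace Ω]
    (μ : ι → κ → Measure Ω) [∀ i j, SigmaFinite (μ i j)] :
    MeasurePreserving (fun (x : ι → κ → Ω) (v : κ × ι) => x v.2 v.1)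
      (Measure.pi fun i => Measure.pi (μ i)) (Measure.pi fun v => μ v.2 v.1) := by
  have hmeas : Measurable fun (x : ι → κ → Ω) (v : κ × ι) => x v.2 v.1 := by fun_prop
  refine ⟨hmeas, (Measure.pi_eq fun A hA => ?_).symm⟩
  rw [Measure.map_apply hmeas (.univ_pi hA)]
  have hpre : (fun (x : ι → κ → Ω) (v : κ × ι) => x v.2 v.1) ⁻¹' Set.univ.pi A =
      Set.univ.pi fun i => Set.univ.pi fun j => A (j, i) := by
    ext x
    simp [Set.mem_pi, forall_comm (α := κ)]
  simp only [hpre, Measure.pi_pi, Fintype.prod_prod_type_right]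

/-! ### Random supports and labels -/

section Model

variable {p m : ℕ}

/-- The possible labels of sample `i`: only `1` for the first `L` samples, both signs afterwards. -/
def labelSet (L : ℕ) (i : Fin m) : Finset ℤˣ :=
  if (i : ℕ) < L then {1} else Finset.univ

/-- The possible label vectors of `L` labelled and `n` unlabelled samples. -/
def labelings (L n : ℕ) : Finset (Fin (L + n) → ℤˣ) :=
  Fintype.piFinset (labelSet L)

/-- The mean of the data when the samples have mean `μ` up to the signs `y`. Coordinates are indexed
by pairs (feature, sample). -/
def signal (μ : Fin p → ℝ) (y : Fin m → ℤˣ) : Fin p × Fin m → ℝ :=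
  fun v => (y v.2 : ℤ) * μ v.1

instance isProbabilityMeasure_gaussPi (θ : Fin p → ℝ) : IsProbabilityMeasure (gaussPi θ) := by
  unfold gaussPi
  infer_instance

lemma labelSet_nonempty (L : ℕ) (i : Fin m) : (labelSet L i).Nonempty := by
  unfold labelSet
  split_ifs
  · exact Finset.singleton_nonempty 1
  · exact Finset.univ_nonempty

lemma measurePreserving_pi_gaussPi (θ : Fin m → Fin p → ℝ) :
    MeasurePreserving (fun (X : Fin m → Fin p → ℝ) (v : Fin p × Fin m) => X v.2 v.1)
      (Measure.pi fun i => gaussPi (θ i)) (piGaussian fun v => θ v.2 v.1) :=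
  measurePreserving_uncurry_pi fun i j => gaussianReal (θ i j) 1

lemma integrable_eval_pi_gaussPi (θ : Fin m → Fin p → ℝ) (f : MvPolynomial (Fin p × Fin m) ℝ) :
    Integrable (fun X => MvPolynomial.eval (fun v => X v.2 v.1) f)
      (Measure.pi fun i => gaussPi (θ i)) :=
  (measurePreserving_pi_gaussPi θ).integrable_comp_of_integrable (integrable_eval_piGaussian _ f)

lemma integral_eval_pi_gaussPi (θ : Fin m → Fin p → ℝ) (f : MvPolynomial (Fin p × Fin m) ℝ) :
    ∫ X, MvPolynomial.eval (fun v => X v.2 v.1) f ∂(Measure.pi fun i => gaussPi (θ i)) =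
      ∫ x, MvPolynomial.eval x f ∂piGaussian fun v => θ v.2 v.1 := by
  rw [← (measurePreserving_pi_gaussPi θ).map_eq, integral_map
    (measurePreserving_pi_gaussPi θ).measurable.aemeasurable
    (MvPolynomial.continuous_eval f).aestronglyMeasurable]

lemma altLaw_eq_mixture (p k L n : ℕ) (lam : ℝ) :
    altLaw p k L n lam = mixture (Finset.univ.powersetCard k) fun S =>
      mixture (labelings L n) fun y =>
        Measure.pi fun i => gaussPi fun j => (y i : ℤ) * muVec p k lam S j := by
  have hsample (S : Finset (Fin p)) (i : Fin (L + n)) :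
      (if (i : ℕ) < L then gaussPi (muVec p k lam S)
        else (2 : ℝ≥0∞)⁻¹ • gaussPi (muVec p k lam S)
          + (2 : ℝ≥0∞)⁻¹ • gaussPi (fun j => -muVec p k lam S j)) =
      mixture (labelSet L i) fun y : ℤˣ => gaussPi fun j => (y : ℤ) * muVec p k lam S j := by
    unfold labelSet mixture
    split_ifs <;> simp [UnitsInt.univ, smul_add]
  simp only [altLaw, hsample, pi_mixture (labelSet_nonempty L)]
  rfl

lemma integral_eval_altLaw (p k L n : ℕ) (lam : ℝ) (f : MvPolynomial (Fin p × Fin (L + n)) ℝ) :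
    ∫ X, MvPolynomial.eval (fun v => X v.2 v.1) f ∂altLaw p k L n lam =
      𝔼 u ∈ Finset.univ.powersetCard k ×ˢ labelings L n,
        ∫ x, MvPolynomial.eval x f ∂piGaussian (signal (muVec p k lam u.1) u.2) := by
  rw [altLaw_eq_mixture, integral_mixture fun S _ => integrable_mixture fun y _ =>
    integrable_eval_pi_gaussPi _ f, Finset.expect_product]
  refine Finset.expect_congr rfl fun S _ => ?_
  rw [integral_mixture fun y _ => integrable_eval_pi_gaussPi _ f]
  exact Finset.expect_congr rfl fun y _ => integral_eval_pi_gaussPi _ f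

theorem sq_integral_altLaw_le_lowDegreeNormSq_mul (p k L n : ℕ) (lam : ℝ)
    (f : MvPolynomial (Fin p × Fin (L + n)) ℝ) :
    (∫ X, MvPolynomial.eval (fun v => X v.2 v.1) f ∂altLaw p k L n lam) ^ 2 ≤
      lowDegreeNormSq (Finset.univ.powersetCard k ×ˢ labelings L n)
          (fun u => signal (muVec p k lam u.1) u.2) f.totalDegree *
        ∫ X, MvPolynomial.eval (fun v => X v.2 v.1) f ^ 2 ∂nullLaw p (L + n) := by
  have hnull := integral_eval_pi_gaussPi (fun (_ : Fin (L + n)) (_ : Fin p) => 0) (f ^ 2)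
  simp only [map_pow] at hnull
  rw [integral_eval_altLaw, nullLaw, hnull]
  exact sq_expect_integral_le_lowDegreeNormSq_mul _ _ le_rfl

lemma muVec_dotProduct_muVec {k : ℕ} {lam : ℝ} (hlam : 0 ≤ lam) (S T : Finset (Fin p)) :
    muVec p k lam S ⬝ᵥ muVec p k lam T = (S ∩ T).card * (lam / k) := by
  have hterm (j : Fin p) :
      muVec p k lam S j * muVec p k lam T j = if j ∈ S ∩ T then lam / k else 0 := by
    have hsqrt : √(lam / k) * √(lam / k) = lam / k := Real.mul_self_sqrt (by positivity)
    simp only [muVec, Finset.mem_inter, ite_and, ite_mul, mul_ite, mul_zero, zero_mul, hsqrt]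
    split_ifs <;> rfl
  simp only [dotProduct, hterm, Finset.sum_ite_mem, Finset.univ_inter, Finset.sum_const,
    nsmul_eq_mul]

lemma signal_dotProduct_signal (μ ν : Fin p → ℝ) (y z : Fin m → ℤˣ) :
    signal μ y ⬝ᵥ signal ν z = (∑ i, ((y i : ℤ) : ℝ) * (z i : ℤ)) * (μ ⬝ᵥ ν) := by
  simp only [dotProduct, signal, Fintype.sum_prod_type_right, Finset.sum_mul_sum]
  exact Finset.sum_congr rfl fun i _ => Finset.sum_congr rfl fun j _ => by ring

lemma expect_piFinset_prod {ι κ : Type*} [Fintype ι] [DecidableEq ι] (t : ι → Finset κ)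
    (g : ι → κ → ℝ) :
    𝔼 y ∈ Fintype.piFinset t, ∏ i, g i (y i) = ∏ i, 𝔼 a ∈ t i, g i a := by
  simp only [Finset.expect_eq_sum_div_card, Finset.prod_div_distrib, Finset.prod_univ_sum,
    Fintype.card_piFinset, Nat.cast_prod]

lemma expect_expect_labelSet_exp (L : ℕ) (i : Fin m) (x : ℝ) :
    𝔼 a ∈ labelSet L i, 𝔼 b ∈ labelSet L i, Real.exp (x * ((a : ℤ) * (b : ℤ))) =
      if (i : ℕ) < L then Real.exp x else Real.cosh x := by
  unfold labelSet
  split_ifs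
  · simp
  · simp [Finset.expect_eq_sum_div_card, UnitsInt.univ, Real.cosh_eq]
    ring

lemma expect_expect_labelings_exp (L n : ℕ) (x : ℝ) :
    𝔼 y ∈ labelings L n, 𝔼 z ∈ labelings L n,
        Real.exp (x * ∑ i, ((y i : ℤ) : ℝ) * (z i : ℤ)) =
      Real.exp x ^ L * Real.cosh x ^ n := by
  simp only [labelings, Finset.mul_sum, Real.exp_sum]
  calc _ = 𝔼 y ∈ Fintype.piFinset (labelSet L), ∏ i : Fin (L + n),
          𝔼 b ∈ labelSet L i, Real.exp (x * ((y i : ℤ) * (b : ℤ))) :=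
        Finset.expect_congr rfl fun y _ =>
          expect_piFinset_prod _ fun i (b : ℤˣ) => Real.exp (x * ((y i : ℤ) * (b : ℤ)))
    _ = ∏ i : Fin (L + n), if (i : ℕ) < L then Real.exp x else Real.cosh x := by
        rw [expect_piFinset_prod _ fun i (a : ℤˣ) =>
          𝔼 b ∈ labelSet L i, Real.exp (x * ((a : ℤ) * (b : ℤ)))]
        simp only [expect_expect_labelSet_exp]
    _ = _ := by simp [Fin.prod_univ_add]

lemma expect_expect_labelings_sum_le (L n D : ℕ) {x r : ℝ} (hx : 0 ≤ x) (hr0 : 0 < r)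
    (hr1 : r ≤ 1) :
    𝔼 y ∈ labelings L n, 𝔼 z ∈ labelings L n, ∑ d ∈ Finset.range (D + 1),
        ((∑ i, ((y i : ℤ) : ℝ) * (z i : ℤ)) * x) ^ d / d.factorial ≤
      (r ^ D)⁻¹ * (Real.exp (r * x) ^ L * Real.cosh (r * x) ^ n) := by
  have hmoment (d : ℕ) : 0 ≤ 𝔼 u ∈ labelings L n ×ˢ labelings L n,
      ((∑ i, ((u.1 i : ℤ) : ℝ) * (u.2 i : ℤ)) * x) ^ d := by
    simp only [Finset.expect_product, mul_pow, ← Finset.expect_mul]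
    exact mul_nonneg (expect_expect_dotProduct_pow_nonneg (labelings L n)
      (fun y i => ((y i : ℤ) : ℝ)) d) (by positivity)
  have hexp := expect_sum_pow_div_factorial_le hmoment hr0 hr1 D
  simpa only [Finset.expect_product, mul_comm _ x, ← mul_assoc r x,
    expect_expect_labelings_exp] using hexp

theorem lowDegreeNormSq_signal_eq (p k L n D : ℕ) {lam : ℝ} (hlam : 0 ≤ lam) :
    lowDegreeNormSq (Finset.univ.powersetCard k ×ˢ labelings L n)
        (fun u => signal (muVec p k lam u.1) u.2) D =
      𝔼 S ∈ (Finset.univ : Finset (Fin p)).powersetCard k,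
        𝔼 T ∈ (Finset.univ : Finset (Fin p)).powersetCard k, 𝔼 y ∈ labelings L n,
        𝔼 z ∈ labelings L n, ∑ d ∈ Finset.range (D + 1),
          ((∑ i, ((y i : ℤ) : ℝ) * (z i : ℤ)) * ((S ∩ T).card * (lam / k))) ^ d /
            d.factorial := by
  simp only [lowDegreeNormSq, Finset.expect_product, signal_dotProduct_signal,
    muVec_dotProduct_muVec hlam]
  exact Finset.expect_congr rfl fun S _ => Finset.expect_comm _ _ _

end Model

section Overlap

lemma descFactorial_mul_pow_le {k p : ℕ} (h : k ≤ p) (a : ℕ) :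
    k.descFactorial a * p ^ a ≤ p.descFactorial a * k ^ a := by
  induction a with
  | zero => simp
  | succ a ih =>
    have hstep : (k - a) * p ≤ (p - a) * k := by
      rw [Nat.sub_mul, Nat.sub_mul, mul_comm p k]
      exact Nat.sub_le_sub_left (Nat.mul_le_mul_left a h) _
    calc k.descFactorial (a + 1) * p ^ (a + 1)
        = ((k - a) * p) * (k.descFactorial a * p ^ a) := by
          rw [Nat.descFactorial_succ]; ring
      _ ≤ ((p - a) * k) * (p.descFactorial a * k ^ a) := Nat.mul_le_mul hstep ih
      _ = p.descFactorial (a + 1) * k ^ (a + 1) := by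
          rw [Nat.descFactorial_succ]; ring

lemma choose_mul_pow_le {k p : ℕ} (h : k ≤ p) (a : ℕ) :
    k.choose a * p ^ a ≤ p.choose a * k ^ a := by
  have hdesc := descFactorial_mul_pow_le h a
  rw [Nat.descFactorial_eq_factorial_mul_choose, Nat.descFactorial_eq_factorial_mul_choose,
    mul_assoc, mul_assoc] at hdesc
  exact Nat.le_of_mul_le_mul_left hdesc a.factorial_pos

variable {α : Type*} [DecidableEq α]

lemma pow_card_inter_eq_sum (q : ℝ) (S T : Finset α) :
    q ^ (S ∩ T).card = ∑ A ∈ S.powerset, (q - 1) ^ A.card * if A ⊆ T then 1 else 0 := by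
  have hbinom := Finset.sum_pow_mul_eq_add_pow (q - 1) 1 (S ∩ T)
  simp only [one_pow, mul_one, sub_add_cancel] at hbinom
  simp only [← hbinom, mul_ite, mul_one, mul_zero, ← Finset.sum_filter]
  refine Finset.sum_congr ?_ fun _ _ => rfl
  ext A
  simp only [Finset.mem_powerset, Finset.mem_filter, Finset.subset_inter_iff]

variable [Fintype α]

lemma expect_powersetCard_ite_subset_le {k : ℕ} (hk : k ≤ Fintype.card α) (A : Finset α) :
    𝔼 T ∈ Finset.univ.powersetCard k, (if A ⊆ T then (1 : ℝ) else 0) ≤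
      (k / Fintype.card α) ^ A.card := by
  rw [Finset.expect_eq_sum_div_card, Finset.sum_boole, Finset.card_powersetCard, Finset.card_univ]
  rcases lt_or_ge k A.card with hA | hA
  · have hempty : (Finset.univ.powersetCard k).filter (A ⊆ ·) = ∅ :=
      Finset.filter_eq_empty_iff.2 fun T hT hAT =>
        hA.not_ge <| (Finset.card_le_card hAT).trans_eq (Finset.mem_powersetCard.1 hT).2
    rw [hempty, Finset.card_empty, Nat.cast_zero, zero_div]
    positivity
  · rw [Finset.card_filter_powersetCard_subset _ _ _ (Finset.subset_univ A) hA, Finset.card_univ]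
    have hcard : (0 : ℝ) < (Fintype.card α).choose k := by exact_mod_cast Nat.choose_pos hk
    have hkA : (0 : ℝ) < k.choose A.card := by exact_mod_cast Nat.choose_pos hA
    have hp : (0 : ℝ) < (Fintype.card α : ℝ) ^ A.card := by
      rcases A.eq_empty_or_nonempty with rfl | ⟨a, _⟩
      · simp
      · have : Nonempty α := ⟨a⟩
        positivity
    rw [div_pow, div_le_div_iff₀ hcard hp, ← mul_le_mul_iff_right₀ hkA]
    norm_cast
    calc k.choose A.card *
          ((Fintype.card α - A.card).choose (k - A.card) * Fintype.card α ^ A.card)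
        = (Fintype.card α - A.card).choose (k - A.card) *
            (k.choose A.card * Fintype.card α ^ A.card) := by ring
      _ ≤ (Fintype.card α - A.card).choose (k - A.card) *
            ((Fintype.card α).choose A.card * k ^ A.card) :=
          Nat.mul_le_mul_left _ (choose_mul_pow_le hk _)
      _ = k.choose A.card * (k ^ A.card * (Fintype.card α).choose k) := by
          rw [mul_left_comm, mul_comm (k.choose A.card), mul_assoc,
            Nat.choose_mul hA]
          ring

lemma expect_powersetCard_pow_card_inter_le {k : ℕ} (hk : k ≤ Fintype.card α) {q : ℝ} (hq : 1 ≤ q)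
    (S : Finset α) :
    𝔼 T ∈ Finset.univ.powersetCard k, q ^ (S ∩ T).card ≤
      ((q - 1) * (k / Fintype.card α) + 1) ^ S.card := by
  simp only [pow_card_inter_eq_sum, Finset.expect_sum_comm, ← Finset.mul_expect]
  rw [← Finset.sum_pow_mul_eq_add_pow]
  refine Finset.sum_le_sum fun A _ => ?_
  rw [one_pow, mul_one, mul_pow]
  exact mul_le_mul_of_nonneg_left (expect_powersetCard_ite_subset_le hk A)
    (pow_nonneg (sub_nonneg.2 hq) _)

lemma expect_powersetCard_pow_card_inter_le_exp {k : ℕ} {q : ℝ} (hq : 1 ≤ q)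
    {S : Finset α} (hS : S.card = k) :
    𝔼 T ∈ Finset.univ.powersetCard k, q ^ (S ∩ T).card ≤
      Real.exp (q * k ^ 2 / Fintype.card α) := by
  have hk : k ≤ Fintype.card α := hS ▸ Finset.card_le_univ S
  calc _ ≤ ((q - 1) * (k / Fintype.card α) + 1) ^ k :=
        hS ▸ expect_powersetCard_pow_card_inter_le hk hq S
    _ ≤ Real.exp (q * (k / Fintype.card α)) ^ k := by
        refine pow_le_pow_left₀
          (add_nonneg (mul_nonneg (by linarith) (by positivity)) zero_le_one) ?_ k
        refine (Real.add_one_le_exp _).trans (Real.exp_le_exp.2 ?_)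
        gcongr
        linarith
    _ = Real.exp (q * k ^ 2 / Fintype.card α) := by
        rw [← Real.exp_nat_mul]
        ring_nf

end Overlap

/-! ### Bounding the low-degree norm -/

lemma exp_pow_mul_cosh_pow_le {L n : ℕ} {r x u : ℝ} (hx : 0 ≤ x) (hr : r ≤ 1) (hL : L * x ≤ u)
    (hn : n * (r * x) ^ 2 ≤ 2) :
    Real.exp (r * x) ^ L * Real.cosh (r * x) ^ n ≤ Real.exp (1 + u) := by
  have hcosh : Real.cosh (r * x) ^ n ≤ Real.exp (n * ((r * x) ^ 2 / 2)) := by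
    rw [Real.exp_nat_mul]
    exact pow_le_pow_left₀ (Real.cosh_pos _).le (Real.cosh_le_exp_half_sq _) n
  have hrx : L * (r * x) ≤ L * x := by
    gcongr
    exact mul_le_of_le_one_left hx hr
  calc Real.exp (r * x) ^ L * Real.cosh (r * x) ^ n
      ≤ Real.exp (r * x) ^ L * Real.exp (n * ((r * x) ^ 2 / 2)) := by gcongr
    _ = Real.exp (L * (r * x) + n * ((r * x) ^ 2 / 2)) := by
        rw [Real.exp_add, Real.exp_nat_mul _ L]
    _ ≤ Real.exp (1 + u) := Real.exp_le_exp.2 (by linarith)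

-- The truncated series is compared with the full one at scale `1` if the overlap `s` is at most `w`
-- and at scale `1 / k` otherwise, where the loss `k ^ D ≤ exp w` is absorbed by `exp s`.
lemma exists_inv_pow_mul_exp_pow_mul_cosh_pow_le {L n D k s : ℕ} {b w x : ℝ} (hk : 0 < k)
    (hw : 1 ≤ w) (hx : 0 ≤ x) (hs : s ≤ k) (hD : D * Real.log k ≤ w) (hL : L * x ≤ b * s)
    (hn : n * x ^ 2 * w ^ 2 ≤ s ^ 2) :
    ∃ r : ℝ, 0 < r ∧ r ≤ 1 ∧ (r ^ D)⁻¹ * (Real.exp (r * x) ^ L * Real.cosh (r * x) ^ n) ≤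
      Real.exp 1 * Real.exp (1 + b) ^ s := by
  have hk' : (1 : ℝ) ≤ k := by exact_mod_cast hk
  have hrhs : Real.exp 1 * Real.exp (1 + b) ^ s = Real.exp s * Real.exp (1 + b * s) := by
    rw [← Real.exp_nat_mul, ← Real.exp_add, ← Real.exp_add]
    ring_nf
  rw [hrhs]
  rcases le_or_gt (s : ℝ) w with hsw | hsw
  · have hnx : n * x ^ 2 ≤ 1 :=
      le_of_mul_le_mul_right (hn.trans (by rw [one_mul]; gcongr)) (by positivity : 0 < w ^ 2)
    have hexp := exp_pow_mul_cosh_pow_le hx le_rfl hL (n := n) (by rw [one_mul]; linarith)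
    refine ⟨1, one_pos, le_rfl, ?_⟩
    rw [one_pow, inv_one, one_mul]
    exact hexp.trans (le_mul_of_one_le_left (Real.exp_pos _).le (Real.one_le_exp s.cast_nonneg))
  · have hr : (k : ℝ)⁻¹ ≤ 1 := inv_le_one_of_one_le₀ hk'
    have hnx : n * ((k : ℝ)⁻¹ * x) ^ 2 ≤ 1 := by
      rw [mul_pow, inv_pow, mul_left_comm, inv_mul_le_one₀ (by positivity)]
      calc n * x ^ 2 ≤ n * x ^ 2 * w ^ 2 :=
            le_mul_of_one_le_right (by positivity) (one_le_pow₀ hw)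
        _ ≤ s ^ 2 := hn
        _ ≤ k ^ 2 := by gcongr
    refine ⟨(k : ℝ)⁻¹, by positivity, hr, mul_le_mul ?_ ?_ ?_ (Real.exp_pos _).le⟩
    · rw [inv_pow, inv_inv, ← Real.exp_log (show (0 : ℝ) < k by positivity), ← Real.exp_nat_mul]
      exact Real.exp_le_exp.2 (hD.trans hsw.le)
    · exact exp_pow_mul_cosh_pow_le hx hr hL (by linarith)
    · exact mul_nonneg (by positivity) (pow_nonneg (Real.cosh_pos _).le n)

lemma expect_expect_labelings_sum_le_exp_pow {k L n D s : ℕ} {lam b w : ℝ} (hk : 0 < k)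
    (hlam : 0 ≤ lam) (hw : 1 ≤ w) (hs : s ≤ k) (hD : D * Real.log k ≤ w) (hL : L * lam ≤ b * k)
    (hn : n * lam ^ 2 * w ^ 2 ≤ k ^ 2) :
    𝔼 y ∈ labelings L n, 𝔼 z ∈ labelings L n, ∑ d ∈ Finset.range (D + 1),
        ((∑ i, ((y i : ℤ) : ℝ) * (z i : ℤ)) * (s * (lam / k))) ^ d / d.factorial ≤
      Real.exp 1 * Real.exp (1 + b) ^ s := by
  have hx : 0 ≤ s * (lam / k) := by positivity
  have hLx : L * (s * (lam / k)) ≤ b * s := by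
    calc L * (s * (lam / k)) = L * lam * (s / k) := by ring
      _ ≤ b * k * (s / k) := by gcongr
      _ = b * s := by field_simp
  have hnx : n * (s * (lam / k)) ^ 2 * w ^ 2 ≤ (s : ℝ) ^ 2 := by
    calc n * (s * (lam / k)) ^ 2 * w ^ 2 = n * lam ^ 2 * w ^ 2 * ((s : ℝ) / k) ^ 2 := by ring
      _ ≤ (k : ℝ) ^ 2 * (s / k) ^ 2 := by gcongr
      _ = (s : ℝ) ^ 2 := by field_simp
  obtain ⟨r, hr0, hr1, hr⟩ :=
    exists_inv_pow_mul_exp_pow_mul_cosh_pow_le hk hw hx hs hD hLx hnx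
  exact (expect_expect_labelings_sum_le L n D hx hr0 hr1).trans hr

lemma lt_of_exp_mul_sq_le {k p : ℕ} {a : ℝ} (hk : 0 < k) (ha : 0 < a)
    (h : Real.exp a * k ^ 2 ≤ p) : k < p := by
  have hk' : (1 : ℝ) ≤ k := by exact_mod_cast hk
  have : (k : ℝ) < p := by
    calc (k : ℝ) ≤ k ^ 2 := le_self_pow₀ hk' two_ne_zero
      _ < Real.exp a * k ^ 2 := lt_mul_of_one_lt_left (by positivity) (Real.one_lt_exp_iff.2 ha)
      _ ≤ p := h
  exact_mod_cast this

theorem lowDegreeNormSq_signal_le {p k L n D : ℕ} {lam b w : ℝ} (hk : 0 < k) (hlam : 0 ≤ lam)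
    (hb : 0 ≤ b) (hw : 1 ≤ w) (hD : D * Real.log k ≤ w) (hL : L * lam ≤ b * k)
    (hn : n * lam ^ 2 * w ^ 2 ≤ k ^ 2) (hp : Real.exp (1 + b) * k ^ 2 ≤ p) :
    lowDegreeNormSq (Finset.univ.powersetCard k ×ˢ labelings L n)
        (fun u => signal (muVec p k lam u.1) u.2) D ≤ Real.exp 2 := by
  have hq : 1 ≤ Real.exp (1 + b) := Real.one_le_exp (by positivity)
  have hkp : k < p := lt_of_exp_mul_sq_le hk (by positivity) hp
  have hsupports : (Finset.univ.powersetCard k : Finset (Finset (Fin p))).Nonempty := by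
    simpa [Finset.powersetCard_nonempty] using hkp.le
  have hoverlap {S : Finset (Fin p)} (hS : S.card = k) :
      𝔼 T ∈ Finset.univ.powersetCard k, Real.exp (1 + b) ^ (S ∩ T).card ≤ Real.exp 1 := by
    refine (expect_powersetCard_pow_card_inter_le_exp hq hS).trans (Real.exp_le_exp.2 ?_)
    rwa [Fintype.card_fin, div_le_one₀ (by exact_mod_cast hk.trans hkp)]
  rw [lowDegreeNormSq_signal_eq p k L n D hlam]
  refine Finset.expect_le hsupports fun S hS => ?_
  replace hS := (Finset.mem_powersetCard.1 hS).2
  calc _ ≤ 𝔼 T ∈ (Finset.univ : Finset (Fin p)).powersetCard k,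
          Real.exp 1 * Real.exp (1 + b) ^ (S ∩ T).card :=
        Finset.expect_le_expect fun T _ => expect_expect_labelings_sum_le_exp_pow hk hlam hw
          ((Finset.card_le_card Finset.inter_subset_left).trans_eq hS) hD hL hn
    _ ≤ Real.exp 1 * Real.exp 1 := by
        rw [← Finset.mul_expect]
        exact mul_le_mul_of_nonneg_left (hoverlap hS) (Real.exp_pos 1).le
    _ = Real.exp 2 := by rw [← Real.exp_add, one_add_one_eq_two]

lemma eventually_mul_log_pow_le_rpow (C : ℝ) (m : ℕ) {a : ℝ} (ha : 0 < a) :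
    ∀ᶠ x : ℝ in atTop, C * Real.log x ^ m ≤ x ^ a := by
  have hlog := ((isLittleO_log_rpow_rpow_atTop (m : ℝ) ha).const_mul_left C).bound one_pos
  filter_upwards [hlog, eventually_ge_atTop 0] with x hx hx0
  rw [one_mul, Real.rpow_natCast, Real.norm_of_nonneg (Real.rpow_nonneg hx0 a)] at hx
  exact (Real.le_norm_self _).trans hx

lemma eventually_exp_mul_sq_natFloor_le {α β c : ℝ} (h : β < 1 / 2 - α) (hc : 0 ≤ c) :
    ∀ᶠ x : ℝ in atTop, Real.exp (1 + 2 * β * Real.log x) * (⌊c * x ^ α⌋₊ : ℝ) ^ 2 ≤ x := by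
  filter_upwards [eventually_gt_atTop 0, (tendsto_rpow_atTop (show 0 < 1 - 2 * α - 2 * β by
    linarith)).eventually_ge_atTop (Real.exp 1 * c ^ 2)] with x hx hxC
  calc Real.exp (1 + 2 * β * Real.log x) * (⌊c * x ^ α⌋₊ : ℝ) ^ 2
      ≤ Real.exp (1 + 2 * β * Real.log x) * (c * x ^ α) ^ 2 := by
        gcongr
        exact Nat.floor_le (by positivity)
    _ = Real.exp 1 * c ^ 2 * x ^ (2 * α + 2 * β) := by
        rw [Real.exp_add, Real.rpow_add hx, mul_comm 2 α, Real.rpow_mul hx.le α,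
          Real.rpow_def_of_pos hx (2 * β), Real.rpow_two]
        ring_nf
    _ ≤ x ^ (1 - 2 * α - 2 * β) * x ^ (2 * α + 2 * β) := by gcongr
    _ = x := by
        rw [← Real.rpow_add hx]
        ring_nf
        exact Real.rpow_one x

lemma eventually_mul_rpow_natFloor_mul_log_pow_le {α γ c : ℝ} (C : ℝ) (m : ℕ) (hα : 0 < α)
    (hγ : γ < 2) (hc : 0 < c) :
    ∀ᶠ x : ℝ in atTop,
      C * (⌊c * x ^ α⌋₊ : ℝ) ^ γ * Real.log x ^ m ≤ (⌊c * x ^ α⌋₊ : ℝ) ^ 2 := by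
  have hlog := eventually_mul_log_pow_le_rpow (C / (c / 2) ^ (2 - γ)) m
    (mul_pos hα (sub_pos.2 hγ))
  filter_upwards [hlog, eventually_ge_atTop 0,
    ((tendsto_rpow_atTop hα).const_mul_atTop hc).eventually_ge_atTop 1] with x hx hx0 hx1
  have hfloor : c / 2 * x ^ α ≤ ⌊c * x ^ α⌋₊ := by
    rw [div_mul_eq_mul_div]
    exact (Nat.div_two_lt_floor hx1).le
  have hpos : (0 : ℝ) < ⌊c * x ^ α⌋₊ := by
    exact_mod_cast Nat.floor_pos.2 hx1
  have hlogle : C * Real.log x ^ m ≤ (⌊c * x ^ α⌋₊ : ℝ) ^ (2 - γ) := by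
    rw [div_mul_eq_mul_div, div_le_iff₀' (by positivity)] at hx
    calc C * Real.log x ^ m ≤ (c / 2) ^ (2 - γ) * x ^ (α * (2 - γ)) := hx
      _ = (c / 2 * x ^ α) ^ (2 - γ) := by
        rw [Real.mul_rpow (by positivity) (by positivity), Real.rpow_mul hx0]
      _ ≤ (⌊c * x ^ α⌋₊ : ℝ) ^ (2 - γ) :=
        Real.rpow_le_rpow (by positivity) hfloor (sub_pos.2 hγ).le
  calc C * (⌊c * x ^ α⌋₊ : ℝ) ^ γ * Real.log x ^ m
      = (⌊c * x ^ α⌋₊ : ℝ) ^ γ * (C * Real.log x ^ m) := by ring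
    _ ≤ (⌊c * x ^ α⌋₊ : ℝ) ^ γ * (⌊c * x ^ α⌋₊ : ℝ) ^ (2 - γ) := by gcongr
    _ = (⌊c * x ^ α⌋₊ : ℝ) ^ 2 := by
      rw [← Real.rpow_add hpos, add_sub_cancel, Real.rpow_two]

lemma natFloor_div_mul_le {a b : ℝ} (ha : 0 ≤ a) (hb : 0 < b) : ⌊a / b⌋₊ * b ≤ a := by
  rw [← le_div_iff₀ hb]
  exact Nat.floor_le (by positivity)

lemma natFloor_mul_log_sub_mul_le {p k : ℕ} {β lam : ℝ} (hβ : 0 ≤ β) (hlam : 0 < lam)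
    (hkp : k < p) :
    ⌊2 * β * k / lam * Real.log (p - k)⌋₊ * lam ≤ 2 * β * Real.log p * k := by
  have hkp' : (k : ℝ) + 1 ≤ p := by exact_mod_cast hkp
  have hlog : 0 ≤ Real.log (p - k) := Real.log_nonneg (by linarith)
  calc ⌊2 * β * k / lam * Real.log (p - k)⌋₊ * lam
      = ⌊2 * β * k * Real.log (p - k) / lam⌋₊ * lam := by rw [div_mul_eq_mul_div]
    _ ≤ 2 * β * k * Real.log (p - k) := natFloor_div_mul_le (by positivity) hlam
    _ = 2 * β * Real.log (p - k) * k := mul_right_comm _ _ _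
    _ ≤ 2 * β * Real.log p * k := by
        gcongr
        · linarith
        · linarith [k.cast_nonneg (α := ℝ)]

/-- Theorem 4: with `k = ⌊c₁ p^α⌋`, `L = ⌊(2βk/λ) log(p-k)⌋`,
`n = ⌊c₂ k^γ / λ²⌋` and degree bound `D = (log p)²`, if `β < 1/2 - α` and `γ < 2`, the squared
low-degree norm stays bounded as `p → ∞`: there is a constant `C` such that eventually every
polynomial `f` of total degree at most `D` satisfies `(E_P f)² ≤ C · E_Q f²`. -/
theorem stmt4 (α β γ lam c1 c2 : ℝ)
    (hα : 0 < α) (hα2 : α < 1 / 2) (hβ : 0 < β) (hγ : 0 < γ) (hlam : 0 < lam)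
    (hc1 : 0 < c1) (hc2 : 0 < c2) (hβ' : β < 1 / 2 - α) (hγ' : γ < 2)
    (k L n : ℕ → ℕ)
    (hk : ∀ p : ℕ, k p = ⌊c1 * (p : ℝ) ^ α⌋₊)
    (hL : ∀ p : ℕ, L p = ⌊2 * β * (k p : ℝ) / lam * Real.log ((p : ℝ) - (k p : ℝ))⌋₊)
    (hn : ∀ p : ℕ, n p = ⌊c2 * (k p : ℝ) ^ γ / lam ^ 2⌋₊) :
    ∃ C : ℝ, ∀ᶠ p : ℕ in atTop,
      ∀ f : MvPolynomial (Fin p × Fin (L p + n p)) ℝ,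
        (f.totalDegree : ℝ) ≤ (Real.log p) ^ 2 →
        (∫ X : Fin (L p + n p) → Fin p → ℝ,
            MvPolynomial.eval (fun v => X v.2 v.1) f ∂(altLaw p (k p) (L p) (n p) lam)) ^ 2
          ≤ C * ∫ X : Fin (L p + n p) → Fin p → ℝ,
              (MvPolynomial.eval (fun v => X v.2 v.1) f) ^ 2 ∂(nullLaw p (L p + n p)) := by
  have hcast := tendsto_natCast_atTop_atTop (R := ℝ)
  refine ⟨Real.exp 2, ?_⟩
  filter_upwards [hcast.eventually (Real.tendsto_log_atTop.eventually_ge_atTop 1),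
    hcast.eventually (((tendsto_rpow_atTop hα).const_mul_atTop hc1).eventually_ge_atTop 1),
    hcast.eventually (eventually_exp_mul_sq_natFloor_le hβ' hc1.le),
    hcast.eventually (eventually_mul_rpow_natFloor_mul_log_pow_le c2 6 hα hγ' hc1)]
    with p hlog hkp1 hkexp hklog f hf
  have hkpos : 0 < k p := hk p ▸ Nat.floor_pos.2 hkp1
  rw [← hk p] at hkexp hklog
  have hkp : k p < p := lt_of_exp_mul_sq_le hkpos (by positivity) hkexp
  refine (sq_integral_altLaw_le_lowDegreeNormSq_mul p (k p) (L p) (n p) lam f).trans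
    (mul_le_mul_of_nonneg_right (lowDegreeNormSq_signal_le hkpos hlam.le
      (b := 2 * β * Real.log p) (by positivity) (one_le_pow₀ hlog (n := 3)) ?_ ?_ ?_ hkexp)
      (integral_nonneg fun _ => sq_nonneg _))
  · calc f.totalDegree * Real.log (k p) ≤ Real.log p ^ 2 * Real.log p := by gcongr
      _ = Real.log p ^ 3 := (pow_succ _ 2).symm
  · exact hL p ▸ natFloor_mul_log_sub_mul_le hβ.le hlam hkp
  · calc n p * lam ^ 2 * (Real.log p ^ 3) ^ 2 ≤ c2 * (k p : ℝ) ^ γ * (Real.log p ^ 3) ^ 2 := by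
          refine mul_le_mul_of_nonneg_right ?_ (by positivity)
          exact hn p ▸ natFloor_div_mul_le (by positivity) (by positivity)
      _ ≤ (k p : ℝ) ^ 2 := by rwa [← pow_mul]
end
end
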